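/- arXiv:2011.04274 — 2 statements merged into one kernel-verified Lean document; each statement's English description precedes it below -/
import Mathlib

section
/- Let 𝒳, 𝒴 be Polish spaces, μ ∈ 𝒫(𝒳), ν ∈ 𝒫(𝒴), and C : 𝒳 × 𝒫(𝒴) → ℝ̄ measurable such that all the integrals below are well-defined. Then the infimum of E[C(X, ℒ(Y|ℱ₁))] over all filtered probability spaces with filtration (ℱ_t)_{t=1}^2 carrying random variables X ∼ μ (ℱ₁-measurable) and Y ∼ ν (ℱ₂-measurable) equals inf_{P ∈ Λ(μ,ν)} ∫ C(x,p) P(dx,dp). -/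
open MeasureTheory Set Filter
open scoped ENNReal NNReal Topology RealInnerProductSpace

noncomputable section

namespace WOT

/-- The set of couplings of `μ` and `ν`. -/
def Couplings {X Y : Type*} [MeasurableSpace X] [MeasurableSpace Y]
    (μ : Measure X) (ν : Measure Y) : Set (Measure (X × Y)) :=
  {π | π.map Prod.fst = μ ∧ π.map Prod.snd = ν}

/-- `K` is a disintegration of `π` with respect to its first marginal `μ`. -/
def IsDisint {X Y : Type*} [MeasurableSpace X] [MeasurableSpace Y]
    (π : Measure (X × Y)) (μ : Measure X) (K : X → Measure Y) : Prop :=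
  Measurable K ∧ (∀ x, IsProbabilityMeasure (K x)) ∧
    ∀ s : Set (X × Y), MeasurableSet s → π s = ∫⁻ x, K x (Prod.mk x ⁻¹' s) ∂μ

/-- The intensity `I(Q)` of a measure on measures. -/
def intensity {Y : Type*} [MeasurableSpace Y] (Q : Measure (Measure Y)) : Measure Y :=
  Q.join

/-- The intensity map `Î`. -/
def intensityHat {X Y : Type*} [MeasurableSpace X] [MeasurableSpace Y]
    (P : Measure (X × Measure Y)) : Measure (X × Y) :=
  P.bind fun xp => (Measure.dirac xp.1).prod xp.2

/-- `Λ(μ,ν)`, the set of probability measures on `X × 𝒫(Y)` whose intensity is a coupling. -/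
def Lambda {X Y : Type*} [MeasurableSpace X] [MeasurableSpace Y]
    (μ : Measure X) (ν : Measure Y) : Set (Measure (X × Measure Y)) :=
  {P | IsProbabilityMeasure P ∧ (∀ᵐ xp ∂P, IsProbabilityMeasure xp.2) ∧
    intensityHat P ∈ Couplings μ ν}

/-- Finite `r`-th moment. -/
def FinMom {X : Type*} [MeasurableSpace X] [PseudoMetricSpace X]
    (r : ℝ) (x₀ : X) (μ : Measure X) : Prop :=
  ∫⁻ x, ENNReal.ofReal (dist x x₀ ^ r) ∂μ < ⊤

/-- The growth class `Φ_r`. -/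
def PhiR {X : Type*} [PseudoMetricSpace X] (r : ℝ) (x₀ : X) : Set (X → ℝ) :=
  {φ | Continuous φ ∧ ∃ K : ℝ, ∀ x, |φ x| ≤ K * (1 + dist x x₀ ^ r)}

/-- The `r`-Wasserstein distance (valued in `ℝ≥0∞`). -/
def Wr {Y : Type*} [MeasurableSpace Y] [PseudoMetricSpace Y]
    (r : ℝ) (p q : Measure Y) : ℝ≥0∞ :=
  ⨅ π ∈ Couplings p q, (∫⁻ z : Y × Y, ENNReal.ofReal (dist z.1 z.2 ^ r) ∂π) ^ (1 / r)

/-- `𝒫_r(Y)`: probability measures with finite `r`-th moment. -/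
def Pr {Y : Type*} [MeasurableSpace Y] [PseudoMetricSpace Y] (r : ℝ) (y₀ : Y) :
    Set (Measure Y) :=
  {p | IsProbabilityMeasure p ∧ FinMom r y₀ p}

/-- `𝒫_r(𝒫_r(Y))`: probability measures on `𝒫_r(Y)` with finite `r`-th moment w.r.t. `𝒲_r`. -/
def PrP {Y : Type*} [MeasurableSpace Y] [PseudoMetricSpace Y] (r : ℝ) (y₀ : Y) :
    Set (Measure (Measure Y)) :=
  {Q | IsProbabilityMeasure Q ∧ (∀ᵐ p ∂Q, p ∈ Pr r y₀) ∧
    ∫⁻ p, Wr r p (Measure.dirac y₀) ^ r ∂Q < ⊤}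

/-- The positive part of an extended real, valued in `ℝ≥0∞`. -/
def epos (e : EReal) : ℝ≥0∞ := if e = ⊤ then ⊤ else ENNReal.ofReal e.toReal

/-- Extended-real integral: positive part minus negative part (with value `⊥` when
both parts are infinite, i.e. when the integral is not well-defined). -/
def eInt {X : Type*} [MeasurableSpace X] (f : X → EReal) (μ : Measure X) : EReal :=
  ((∫⁻ x, epos (f x) ∂μ : ℝ≥0∞) : EReal) - ((∫⁻ x, epos (-(f x)) ∂μ : ℝ≥0∞) : EReal)

/-- Extended-real integral with the opposite (`⊤`) convention for ill-defined integrals. -/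
def eIntU {X : Type*} [MeasurableSpace X] (f : X → EReal) (μ : Measure X) : EReal :=
  -eInt (fun x => -(f x)) μ

/-- The extended-real integral is well-defined. -/
def eIntWellDef {X : Type*} [MeasurableSpace X] (f : X → EReal) (μ : Measure X) : Prop :=
  (∫⁻ x, epos (f x) ∂μ ≠ ⊤) ∨ (∫⁻ x, epos (-(f x)) ∂μ ≠ ⊤)

/-- Convergence in the `r`-Wasserstein distance. -/
def WrTendsto {Y : Type*} [MeasurableSpace Y] [PseudoMetricSpace Y]
    (r : ℝ) (ps : ℕ → Measure Y) (p : Measure Y) : Prop :=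
  Tendsto (fun n => Wr r (ps n) p) atTop (nhds 0)

/-- (Sequential) lower semicontinuity on `𝒫_r(Y)` w.r.t. `𝒲_r`. -/
def LscWr1 {Y : Type*} [MeasurableSpace Y] [PseudoMetricSpace Y]
    (r : ℝ) (y₀ : Y) (G : Measure Y → EReal) : Prop :=
  ∀ (p : Measure Y) (ps : ℕ → Measure Y), p ∈ Pr r y₀ → (∀ n, ps n ∈ Pr r y₀) →
    WrTendsto r ps p → G p ≤ liminf (fun n => G (ps n)) atTop

/-- (Sequential) upper semicontinuity on `𝒫_r(Y)` w.r.t. `𝒲_r`. -/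
def UscWr1 {Y : Type*} [MeasurableSpace Y] [PseudoMetricSpace Y]
    (r : ℝ) (y₀ : Y) (G : Measure Y → EReal) : Prop :=
  ∀ (p : Measure Y) (ps : ℕ → Measure Y), p ∈ Pr r y₀ → (∀ n, ps n ∈ Pr r y₀) →
    WrTendsto r ps p → limsup (fun n => G (ps n)) atTop ≤ G p

/-- (Sequential) lower semicontinuity on `X × 𝒫_r(Y)` w.r.t. `d_X × 𝒲_r`. -/
def LscWr {X Y : Type*} [TopologicalSpace X] [MeasurableSpace Y] [PseudoMetricSpace Y]
    (r : ℝ) (y₀ : Y) (C : X × Measure Y → EReal) : Prop :=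
  ∀ (x : X) (xs : ℕ → X) (p : Measure Y) (ps : ℕ → Measure Y),
    p ∈ Pr r y₀ → (∀ n, ps n ∈ Pr r y₀) → Tendsto xs atTop (nhds x) → WrTendsto r ps p →
    C (x, p) ≤ liminf (fun n => C (xs n, ps n)) atTop

/-- (Sequential) continuity of a real-valued cost on `X × 𝒫_r(Y)` w.r.t. `d_X × 𝒲_r`. -/
def ContWr {X Y : Type*} [TopologicalSpace X] [MeasurableSpace Y] [PseudoMetricSpace Y]
    (r : ℝ) (y₀ : Y) (C : X × Measure Y → ℝ) : Prop :=
  ∀ (x : X) (xs : ℕ → X) (p : Measure Y) (ps : ℕ → Measure Y),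
    p ∈ Pr r y₀ → (∀ n, ps n ∈ Pr r y₀) → Tendsto xs atTop (nhds x) → WrTendsto r ps p →
    Tendsto (fun n => C (xs n, ps n)) atTop (nhds (C (x, p)))

/-- Convexity of an extended-real-valued function on a set of measures. -/
def EConvexOn {Y : Type*} [MeasurableSpace Y] (S : Set (Measure Y)) (G : Measure Y → EReal) :
    Prop :=
  ∀ p ∈ S, ∀ q ∈ S, ∀ t : ℝ≥0, t ≤ 1 →
    G ((t : ℝ≥0∞) • p + ((1 - t : ℝ≥0) : ℝ≥0∞) • q)
      ≤ ((t : ℝ) : EReal) * G p + (((1 - t : ℝ≥0) : ℝ) : EReal) * G q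

/-- The lower semicontinuous convex envelope (on `𝒫_r(Y)` w.r.t. `𝒲_r`). -/
def cvxEnvWr {Y : Type*} [MeasurableSpace Y] [PseudoMetricSpace Y]
    (r : ℝ) (y₀ : Y) (f : Measure Y → EReal) : Measure Y → EReal :=
  fun p => ⨆ G ∈ {G : Measure Y → EReal |
    LscWr1 r y₀ G ∧ EConvexOn (Pr r y₀) G ∧ ∀ q ∈ Pr r y₀, G q ≤ f q}, G p

/-- The cost `C̃(x,p) = inf {∫ C(x,q) Q(dq) : Q ∈ 𝒫_r(𝒫_r(Y)), I(Q) = p}`. -/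
def tildeC {X Y : Type*} [MeasurableSpace X] [MeasurableSpace Y] [PseudoMetricSpace Y]
    (r : ℝ) (y₀ : Y) (C : X × Measure Y → EReal) : X × Measure Y → EReal :=
  fun xp => ⨅ Q ∈ {Q | Q ∈ PrP r y₀ ∧ intensity Q = xp.2}, eInt (fun q => C (xp.1, q)) Q

/-- The barycenter of a measure on a normed space. -/
def bary {E : Type*} [NormedAddCommGroup E] [NormedSpace ℝ E] [MeasurableSpace E]
    (p : Measure E) : E :=
  ∫ y, y ∂p

/-- Convex order of measures. -/
def ConvexOrder {E : Type*} [NormedAddCommGroup E] [NormedSpace ℝ E] [MeasurableSpace E]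
    (ν' ν : Measure E) : Prop :=
  ∀ θ : E → ℝ, ConvexOn ℝ Set.univ θ →
    eInt (fun y => ((θ y : ℝ) : EReal)) ν' ≤ eInt (fun y => ((θ y : ℝ) : EReal)) ν

/-- The inf-convolution `R_C ψ`. -/
def RC {X Y : Type*} [MeasurableSpace Y] [PseudoMetricSpace Y]
    (r : ℝ) (y₀ : Y) (C : X × Measure Y → EReal) (ψ : Y → ℝ) : X → EReal :=
  fun x => ⨅ p ∈ Pr r y₀, (((-∫ y, ψ y ∂p : ℝ) : EReal) + C (x, p))

/-- `κ` is a regular conditional distribution of `Yv` given the sub-σ-algebra `m1`. -/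
def IsRCD {Ω Y : Type*} [MeasurableSpace Y] (m1 : MeasurableSpace Ω)
    (mΩ : MeasurableSpace Ω) (P : @Measure Ω mΩ) (Yv : Ω → Y) (κ : Ω → Measure Y) : Prop :=
  (∀ ω, IsProbabilityMeasure (κ ω)) ∧ Measurable[m1] κ ∧
    ∀ A : Set Y, MeasurableSet A → ∀ B : Set Ω, MeasurableSet[m1] B →
      P (B ∩ Yv ⁻¹' A) = ∫⁻ ω in B, κ ω A ∂P

end WOT

open WOT

universe u v

/-!
For a process with conditional law `κ` of `Yv` given `m1`, the law `Q` of `(Xv, κ)` satisfies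
`Î(Q) = law (Xv, Yv)`, because this is the defining property of `κ` tested on rectangles; hence
`Q ∈ Λ(μ, ν)`. Conversely, given `Q ∈ Λ(μ, ν)`, draw `(x, p)` from `Q`, then `y` from `p`, and let
the first σ-algebra be generated by `(x, p)`: the conditional law of `y` is `p`, the law of `(x, y)`
is `Î(Q)`, and the law of `(x, p)` is again `Q`. Both infima therefore range over the same set of
values.
-/

open ProbabilityTheory

namespace WOT

variable {Ω A X Y : Type*} [MeasurableSpace A] [MeasurableSpace X] [MeasurableSpace Y]

lemma measurable_epos : Measurable epos :=
  Measurable.ite (measurableSet_singleton _) measurable_const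
    (ENNReal.measurable_ofReal.comp measurable_ereal_toReal)

lemma eInt_map {P : Measure A} {f : A → X} (hf : Measurable f) {g : X → EReal}
    (hg : Measurable g) : eInt g (P.map f) = eInt (fun a => g (f a)) P := by
  have hpos : Measurable fun x => epos (g x) := measurable_epos.comp hg
  have hneg : Measurable fun x => epos (-g x) := measurable_epos.comp hg.neg
  rw [eInt, lintegral_map hpos hf, lintegral_map hneg hf, eInt]

lemma measurableSet_isProbabilityMeasure :
    MeasurableSet {p : Measure Y | IsProbabilityMeasure p} := by
  simp only [isProbabilityMeasure_iff]
  exact Measure.measurable_coe .univ (measurableSet_singleton 1)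

lemma exists_markovKernel_ae_eq {Q : Measure A} [NeZero Q] {f : A → Measure Y}
    (hf : Measurable f) (hprob : ∀ᵐ a ∂Q, IsProbabilityMeasure (f a)) :
    ∃ η : Kernel A Y, IsMarkovKernel η ∧ η =ᵐ[Q] f := by
  classical
  obtain ⟨a₀, ha₀⟩ := hprob.exists
  let η : Kernel A Y := Kernel.piecewise (hf measurableSet_isProbabilityMeasure)
    ⟨f, hf⟩ (Kernel.const A (f a₀))
  refine ⟨η, ⟨fun a => ?_⟩, hprob.mono fun a ha => if_pos ha⟩
  rw [Kernel.piecewise_apply]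
  split_ifs with ha
  · exact ha
  · exact ha₀

lemma intensityHat_eq_map_compProd {Q : Measure (X × Measure Y)} [SFinite Q]
    {η : Kernel (X × Measure Y) Y} [IsMarkovKernel η] (hη : η =ᵐ[Q] Prod.snd) :
    intensityHat Q = (Q ⊗ₘ η).map fun z => (z.1.1, z.2) := by
  change _ = (Q ⊗ₘ η).map (Prod.map Prod.fst id)
  have hmeas : Measurable (Prod.map Prod.fst id : (X × Measure Y) × Y → X × Y) :=
    measurable_fst.prodMap measurable_id
  rw [Measure.compProd_eq_comp_prod, Measure.map_comp _ _ hmeas]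
  refine Measure.bind_congr_right (hη.mono fun xp hxp => ?_)
  rw [Kernel.map_apply _ hmeas, Kernel.prod_apply, Kernel.id_apply,
    ← Measure.map_prod_map _ _ measurable_fst measurable_id, Measure.map_dirac' measurable_fst,
    Measure.map_id, hxp]

lemma intensityHat_prod {Q : Measure (X × Measure Y)} [SFinite Q]
    (hprob : ∀ᵐ xp ∂Q, IsProbabilityMeasure xp.2) {s : Set X} (hs : MeasurableSet s)
    {t : Set Y} (ht : MeasurableSet t) :
    intensityHat Q (s ×ˢ t) = ∫⁻ xp in Prod.fst ⁻¹' s, xp.2 t ∂Q := by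
  rcases eq_zero_or_neZero Q with rfl | _
  · simp [intensityHat]
  obtain ⟨η, _, hη⟩ := exists_markovKernel_ae_eq measurable_snd hprob
  have hmeas : Measurable fun z : (X × Measure Y) × Y => (z.1.1, z.2) :=
    measurable_fst.fst.prodMk measurable_snd
  calc intensityHat Q (s ×ˢ t)
      = (Q ⊗ₘ η) ((Prod.fst ⁻¹' s) ×ˢ t) := by
        rw [intensityHat_eq_map_compProd hη, Measure.map_apply hmeas (hs.prod ht)]
        rfl
    _ = ∫⁻ xp in Prod.fst ⁻¹' s, η xp t ∂Q := Measure.compProd_apply_prod (measurable_fst hs) ht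
    _ = ∫⁻ xp in Prod.fst ⁻¹' s, xp.2 t ∂Q :=
        lintegral_congr_ae (ae_restrict_of_ae (hη.mono fun xp hxp => congrArg (· t) hxp))

section ConditionalLaw

variable {m1 m2 : MeasurableSpace Ω} {P : Measure[m2] Ω} {Xv : Ω → X} {Yv : Ω → Y}
  {κ : Ω → Measure Y}

lemma IsRCD.measurable_prodMk (hκ : IsRCD m1 m2 P Yv κ) (hm : m1 ≤ m2)
    (hX : Measurable[m1] Xv) : Measurable[m2] fun ω => (Xv ω, κ ω) :=
  (hX.prodMk hκ.2.1).mono hm le_rfl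

lemma IsRCD.ae_isProbabilityMeasure_map_prodMk (hκ : IsRCD m1 m2 P Yv κ) (hm : m1 ≤ m2)
    (hX : Measurable[m1] Xv) :
    ∀ᵐ xp ∂P.map (fun ω => (Xv ω, κ ω)), IsProbabilityMeasure xp.2 :=
  (ae_map_iff (hκ.measurable_prodMk hm hX).aemeasurable
    (measurable_snd measurableSet_isProbabilityMeasure)).2 (ae_of_all _ hκ.1)

lemma IsRCD.intensityHat_map_prodMk [IsFiniteMeasure P] (hκ : IsRCD m1 m2 P Yv κ) (hm : m1 ≤ m2)
    (hX : Measurable[m1] Xv) (hY : Measurable[m2] Yv) :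
    intensityHat (P.map fun ω => (Xv ω, κ ω)) = P.map fun ω => (Xv ω, Yv ω) := by
  have hXY : Measurable[m2] fun ω => (Xv ω, Yv ω) := (hX.mono hm le_rfl).prodMk hY
  refine (Measure.ext_prod fun {s t} hs ht => ?_).symm
  calc P.map (fun ω => (Xv ω, Yv ω)) (s ×ˢ t)
      = P (Xv ⁻¹' s ∩ Yv ⁻¹' t) := by
        rw [Measure.map_apply hXY (hs.prod ht), Set.mk_preimage_prod]
    _ = ∫⁻ ω in Xv ⁻¹' s, κ ω t ∂P := hκ.2.2 t ht _ (hX hs)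
    _ = ∫⁻ xp in Prod.fst ⁻¹' s, xp.2 t ∂P.map fun ω => (Xv ω, κ ω) :=
        (setLIntegral_map (measurable_fst hs) ((Measure.measurable_coe ht).comp measurable_snd)
          (hκ.measurable_prodMk hm hX)).symm
    _ = intensityHat (P.map fun ω => (Xv ω, κ ω)) (s ×ˢ t) :=
        (intensityHat_prod (hκ.ae_isProbabilityMeasure_map_prodMk hm hX) hs ht).symm

lemma IsRCD.map_prodMk_mem_Lambda [IsProbabilityMeasure P] (hκ : IsRCD m1 m2 P Yv κ)
    (hm : m1 ≤ m2) (hX : Measurable[m1] Xv) (hY : Measurable[m2] Yv) :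
    P.map (fun ω => (Xv ω, κ ω)) ∈ Lambda (P.map Xv) (P.map Yv) := by
  refine ⟨Measure.isProbabilityMeasure_map (hκ.measurable_prodMk hm hX).aemeasurable,
    hκ.ae_isProbabilityMeasure_map_prodMk hm hX, ?_⟩
  rw [hκ.intensityHat_map_prodMk hm hX hY]
  exact ⟨Measure.fst_map_prodMk hY, Measure.snd_map_prodMk (hX.mono hm le_rfl)⟩

end ConditionalLaw

lemma isRCD_compProd {Q : Measure A} [SFinite Q] {η : Kernel A Y} [IsMarkovKernel η] :
    IsRCD (.comap Prod.fst inferInstance) inferInstance (Q ⊗ₘ η) Prod.snd (fun z => η z.1) := by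
  refine ⟨fun _ => inferInstance, η.measurable.comp (comap_measurable _), ?_⟩
  rintro t ht _ ⟨s, hs, rfl⟩
  calc (Q ⊗ₘ η) (Prod.fst ⁻¹' s ∩ Prod.snd ⁻¹' t)
      = ∫⁻ a in s, η a t ∂Q := by rw [← Set.prod_eq, Measure.compProd_apply_prod hs ht]
    _ = ∫⁻ a in s, η a t ∂(Q ⊗ₘ η).fst := by rw [Measure.fst_compProd]
    _ = ∫⁻ z in Prod.fst ⁻¹' s, η z.1 t ∂(Q ⊗ₘ η) :=
        setLIntegral_map hs (η.measurable_coe ht) measurable_fst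

lemma map_prodMk_compProd {Q : Measure (X × Measure Y)} [SFinite Q]
    {η : Kernel (X × Measure Y) Y} [IsMarkovKernel η] (hη : η =ᵐ[Q] Prod.snd) :
    (Q ⊗ₘ η).map (fun z => (z.1.1, η z.1)) = Q := by
  have hmeas : Measurable fun xp : X × Measure Y => (xp.1, η xp) :=
    measurable_fst.prodMk η.measurable
  calc (Q ⊗ₘ η).map (fun z => (z.1.1, η z.1))
      = (Q ⊗ₘ η).fst.map fun xp => (xp.1, η xp) := (Measure.map_map hmeas measurable_fst).symm
    _ = Q.map fun xp => (xp.1, η xp) := by rw [Measure.fst_compProd]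
    _ = Q.map id := Measure.map_congr (hη.mono fun xp hxp => Prod.ext rfl hxp)
    _ = Q := Measure.map_id

end WOT

theorem statement4_general {X : Type u} {Y : Type v} [MeasurableSpace X] [MeasurableSpace Y]
    (μ : Measure X) (ν : Measure Y) (C : X × Measure Y → EReal) (hC : Measurable C)
    (_hwell : ∀ P ∈ Lambda μ ν, eIntWellDef C P) :
    sInf {v : EReal | ∃ (Ω : Type (max u v)) (m1 m2 : MeasurableSpace Ω), m1 ≤ m2 ∧
        ∃ (P : @Measure Ω m2) (Xv : Ω → X) (Yv : Ω → Y) (κ : Ω → Measure Y),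
          @IsProbabilityMeasure Ω m2 P ∧ Measurable[m1] Xv ∧ Measurable[m2] Yv ∧
          @Measure.map Ω X m2 _ Xv P = μ ∧ @Measure.map Ω Y m2 _ Yv P = ν ∧
          IsRCD m1 m2 P Yv κ ∧ v = @eInt Ω m2 (fun ω => C (Xv ω, κ ω)) P}
      = sInf {v : EReal | ∃ P ∈ Lambda μ ν, v = eInt C P} := by
  congr 1
  ext v
  constructor
  · rintro ⟨Ω, m1, m2, hm, P, Xv, Yv, κ, _, hX, hY, rfl, rfl, hκ, rfl⟩
    exact ⟨_, hκ.map_prodMk_mem_Lambda hm hX hY,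
      (eInt_map (hκ.measurable_prodMk hm hX) hC).symm⟩
  · rintro ⟨Q, ⟨_, hprob, hfst, hsnd⟩, rfl⟩
    obtain ⟨η, _, hη⟩ := exists_markovKernel_ae_eq measurable_snd hprob
    rw [intensityHat_eq_map_compProd hη] at hfst hsnd
    have hXκ : Measurable fun z : (X × Measure Y) × Y => (z.1.1, η z.1) :=
      measurable_fst.fst.prodMk (η.measurable.comp measurable_fst)
    refine ⟨(X × Measure Y) × Y, .comap Prod.fst inferInstance, inferInstance,
      measurable_fst.comap_le, Q ⊗ₘ η, fun z => z.1.1, Prod.snd, fun z => η z.1, inferInstance,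
      measurable_fst.comp (comap_measurable _), measurable_snd,
      (Measure.fst_map_prodMk measurable_snd).symm.trans hfst,
      (Measure.snd_map_prodMk measurable_fst.fst).symm.trans hsnd, isRCD_compProd, ?_⟩
    rw [← eInt_map hXκ hC, map_prodMk_compProd hη]

/-- the weak transport problem over filtered processes equals the relaxed
problem over `Λ(μ,ν)` (Corollary `cor.w'`). -/
theorem statement4 {X : Type u} {Y : Type v}
    [MeasurableSpace X] [MetricSpace X] [CompleteSpace X] [SecondCountableTopology X]
    [BorelSpace X]
    [MeasurableSpace Y] [MetricSpace Y] [CompleteSpace Y] [SecondCountableTopology Y]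
    [BorelSpace Y]
    (μ : Measure X) (ν : Measure Y) [IsProbabilityMeasure μ] [IsProbabilityMeasure ν]
    (C : X × Measure Y → EReal) (hC : Measurable C)
    (hwell : ∀ P ∈ Lambda μ ν, eIntWellDef C P)
    (hwell' : ∀ (Ω : Type (max u v)) (m1 m2 : MeasurableSpace Ω), m1 ≤ m2 →
      ∀ (P : @Measure Ω m2) (Xv : Ω → X) (Yv : Ω → Y) (κ : Ω → Measure Y),
        @IsProbabilityMeasure Ω m2 P → Measurable[m1] Xv → Measurable[m2] Yv →
        @Measure.map Ω X m2 _ Xv P = μ → @Measure.map Ω Y m2 _ Yv P = ν →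
        IsRCD m1 m2 P Yv κ → @eIntWellDef Ω m2 (fun ω => C (Xv ω, κ ω)) P) :
    sInf {v : EReal | ∃ (Ω : Type (max u v)) (m1 m2 : MeasurableSpace Ω), m1 ≤ m2 ∧
        ∃ (P : @Measure Ω m2) (Xv : Ω → X) (Yv : Ω → Y) (κ : Ω → Measure Y),
          @IsProbabilityMeasure Ω m2 P ∧ Measurable[m1] Xv ∧ Measurable[m2] Yv ∧
          @Measure.map Ω X m2 _ Xv P = μ ∧ @Measure.map Ω Y m2 _ Yv P = ν ∧
          IsRCD m1 m2 P Yv κ ∧ v = @eInt Ω m2 (fun ω => C (Xv ω, κ ω)) P}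
      = sInf {v : EReal | ∃ P ∈ Lambda μ ν, v = eInt C P} :=
  statement4_general μ ν C hC hwell
end
end

section
/- Let 𝒳, 𝒴 be Polish spaces, r ∈ [1,∞), μ ∈ 𝒫_r(𝒳), ν ∈ 𝒫_r(𝒴), and let C : 𝒳 × 𝒫_r(𝒴) → ℝ ∪ {+∞} be lower semicontinuous such that there exist a constant K > 0 and (x₀,y₀) ∈ 𝒳 × 𝒴 with C(x,p) ≥ −K(1 + d_𝒳(x,x₀)^r + 𝒲_r(p,δ_{y₀})^r) for all (x,p). Then inf_{P ∈ Λ(μ,ν)} ∫ C(x,p) P(dx,dp) = sup_{ψ ∈ Φ_r(𝒴)} [ ν(ψ) + ∫ R_Cψ(x) μ(dx) ] = sup{ μ(φ) + ν(ψ) : φ ∈ Φ_r(𝒳), ψ ∈ Φ_r(𝒴), φ(x) + p(ψ) ≤ C(x,p) for all (x,p) ∈ 𝒳 × 𝒫_r(𝒴) }. -/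
open MeasureTheory Set Filter
open scoped ENNReal NNReal Topology RealInnerProductSpace

noncomputable section

open WOT

/-
Idea. Embed `𝒳` and `𝒴` in the Hilbert cube. The map `(x, p) ↦ (eX x, (eY)_# p, ∫ d(y, y₀)^r dp)`
sends `𝒳 × 𝒫(𝒴)` into a compact metrizable space `Z`. Weak convergence together with convergence of
the `r`-th moments is `𝒲_r`-convergence, so the cost, made nonnegative by adding
`K (1 + d(x, x₀)^r + ∫ d(y, y₀)^r dp)`, extends to a lower semicontinuous cost on `Z`. On `Z` strong
duality holds by a Hahn–Banach argument in finite dimensions and compactness of `𝒫(Z)`; the third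
coordinate of the optimal measure cannot carry more than the `r`-th moment of `ν`, which forces that
measure onto the image of `𝒳 × 𝒫(𝒴)`, where it is a relaxed plan. The reverse inequality needs
`R_C ψ` to be `μ`-measurable: its strict sublevel sets are projections of Borel sets, hence
analytic.
-/

namespace WOT

section Semicontinuity

lemma exists_lowerSemicontinuous_extension {A Z γ : Type*} [TopologicalSpace Z]
    [FirstCountableTopology Z] [CompleteLinearOrder γ] [DenselyOrdered γ] (j : A → Z) (f : A → γ)
    (hf : ∀ (a : A) (as : ℕ → A), Tendsto (fun n => j (as n)) atTop (𝓝 (j a)) →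
      f a ≤ liminf (fun n => f (as n)) atTop) :
    ∃ g : Z → γ, LowerSemicontinuous g ∧ ∀ a, g (j a) = f a := by
  refine ⟨fun z => ⨆ V ∈ {V : Set Z | IsOpen V ∧ z ∈ V}, ⨅ a ∈ j ⁻¹' V, f a, ?_, fun a => ?_⟩
  · intro z t ht
    simp only [lt_iSup_iff] at ht
    obtain ⟨V, ⟨hV, hzV⟩, ht⟩ := ht
    filter_upwards [hV.mem_nhds hzV] with z' hz'
    exact ht.trans_le (le_iSup₂_of_le V ⟨hV, hz'⟩ le_rfl)
  · refine le_antisymm (iSup₂_le fun V hV => iInf₂_le a hV.2) ?_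
    by_contra! h
    obtain ⟨t, hlt, htf⟩ := exists_between h
    obtain ⟨B, hB⟩ := (𝓝 (j a)).exists_antitone_basis
    have hsmall : ∀ n, ∃ a', j a' ∈ B n ∧ f a' ≤ t := by
      intro n
      by_contra! hn
      obtain ⟨V, hVB, hV, haV⟩ := mem_nhds_iff.1 (hB.mem n)
      exact absurd hlt (not_lt.2 (le_iSup₂_of_le V ⟨hV, haV⟩
        (le_iInf₂ fun a' ha' => (hn a' (hVB ha')).le)))
    choose as has hle using hsmall
    exact absurd htf (not_lt.2 ((hf a as (hB.tendsto has)).trans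
      ((liminf_le_liminf (Eventually.of_forall hle)).trans (liminf_const t).le)))

variable {Z : Type*} [TopologicalSpace Z] [TopologicalSpace.PseudoMetrizableSpace Z]
  [TopologicalSpace.SeparableSpace Z] [MeasurableSpace Z] [OpensMeasurableSpace Z]

lemma lowerSemicontinuous_lintegral_ofReal {f : Z → ℝ} (hf : LowerSemicontinuous f)
    (hf0 : 0 ≤ f) :
    LowerSemicontinuous fun Q : ProbabilityMeasure Z => ∫⁻ z, ENNReal.ofReal (f z) ∂Q := by
  refine lowerSemicontinuous_iff_isClosed_preimage.2 fun b =>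
    IsSeqClosed.isClosed fun Qs Q hQs hQ => ?_
  simp only [mem_preimage, mem_Iic,
    lintegral_eq_lintegral_meas_lt _ (Eventually.of_forall hf0) hf.measurable.aemeasurable]
    at hQs ⊢
  calc ∫⁻ t in Ioi (0 : ℝ), (Q : Measure Z) {a | t < f a}
      ≤ ∫⁻ t in Ioi (0 : ℝ), liminf (fun i => (Qs i : Measure Z) {a | t < f a}) atTop :=
        lintegral_mono fun t =>
          ProbabilityMeasure.le_liminf_measure_open_of_tendsto hQ (hf.isOpen_preimage t)
    _ ≤ liminf (fun i => ∫⁻ t in Ioi (0 : ℝ), (Qs i : Measure Z) {a | t < f a}) atTop :=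
        lintegral_liminf_le fun _ => Antitone.measurable fun _ _ hst =>
          measure_mono fun _ hω => lt_of_le_of_lt hst hω
    _ ≤ b := (liminf_le_liminf (Eventually.of_forall hQs)).trans (liminf_const b).le

lemma lowerSemicontinuous_lintegral {c : Z → ℝ≥0∞} (hc : LowerSemicontinuous c) :
    LowerSemicontinuous fun Q : ProbabilityMeasure Z => ∫⁻ z, c z ∂Q := by
  have htrunc : ∀ N : ℕ, LowerSemicontinuous fun Q : ProbabilityMeasure Z =>
      ∫⁻ z, ENNReal.ofReal (ENNReal.truncateToReal N (c z)) ∂Q := fun N =>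
    lowerSemicontinuous_lintegral_ofReal
      ((ENNReal.continuous_truncateToReal (ENNReal.natCast_ne_top N)).comp_lowerSemicontinuous hc
        (ENNReal.monotone_truncateToReal (ENNReal.natCast_ne_top N)))
      fun _ => ENNReal.toReal_nonneg
  have htruncate : ∀ (N : ℕ) (z : Z),
      ENNReal.ofReal (ENNReal.truncateToReal N (c z)) = min (N : ℝ≥0∞) (c z) := fun N z =>
    ENNReal.ofReal_toReal (ne_top_of_le_ne_top (ENNReal.natCast_ne_top N) (min_le_left _ _))
  have hsup : ∀ z, c z = ⨆ N : ℕ, min (N : ℝ≥0∞) (c z) := fun z => by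
    rw [← iSup_inf_eq, ENNReal.iSup_natCast, top_inf_eq]
  convert lowerSemicontinuous_iSup htrunc using 2 with Q
  simp only [htruncate]
  rw [lintegral_congr hsup, lintegral_iSup (fun N => measurable_const.min hc.measurable)
    fun N M hNM z => min_le_min_right _ (Nat.cast_le.2 hNM)]

end Semicontinuity

section MeasuresOnMeasures

open MeasurableSpace

lemma measurable_integral {Y : Type*} [MeasurableSpace Y] {ψ : Y → ℝ} (hψ : Measurable ψ) :
    Measurable fun p : Measure Y => ∫ y, ψ y ∂p := by
  classical
  have hfin : MeasurableSet {p : Measure Y | Integrable ψ p} := by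
    have : {p : Measure Y | Integrable ψ p} = {p | ∫⁻ y, ‖ψ y‖ₑ ∂p < ⊤} := by
      ext p
      exact ⟨fun h => h.2, fun h => ⟨hψ.aestronglyMeasurable, h⟩⟩
    rw [this]
    exact measurableSet_lt (Measure.measurable_lintegral hψ.enorm) measurable_const
  have hparts : Measurable fun p : Measure Y => (∫⁻ y, ENNReal.ofReal (ψ y) ∂p).toReal
      - (∫⁻ y, ENNReal.ofReal (-ψ y) ∂p).toReal :=
    (Measure.measurable_lintegral hψ.ennreal_ofReal).ennreal_toReal.sub
      (Measure.measurable_lintegral hψ.neg.ennreal_ofReal).ennreal_toReal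
  convert Measurable.ite hfin hparts (measurable_const (a := (0 : ℝ))) using 2 with p
  · split_ifs with h
    · exact integral_eq_lintegral_pos_part_sub_lintegral_neg_part h
    · exact integral_undef h
  · exact Classical.decPred _

lemma measurableEmbedding_toMeasure (Y : Type*) [MeasurableSpace Y] :
    MeasurableEmbedding ((↑) : ProbabilityMeasure Y → Measure Y) :=
  MeasurableEmbedding.subtype_coe ProbabilityMeasure.measurableSet_isProbabilityMeasure

lemma countablySeparated_probabilityMeasure (Y : Type*) [MeasurableSpace Y]
    [CountablyGenerated Y] : CountablySeparated (ProbabilityMeasure Y) := by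
  let S := generateSetAlgebra (countableGeneratingSet Y)
  have hSmeas : ∀ s ∈ S, MeasurableSet s := fun s hs => by
    rw [← generateFrom_countableGeneratingSet (α := Y),
      ← generateFrom_generateSetAlgebra_eq (𝒜 := countableGeneratingSet Y)]
    exact measurableSet_generateFrom hs
  have : Countable S :=
    (countable_generateSetAlgebra (countable_countableGeneratingSet (α := Y))).to_subtype
  let masses : ProbabilityMeasure Y → S → ℝ≥0∞ := fun p s => (p : Measure Y) s
  have hmasses : Measurable masses := measurable_pi_lambda _ fun s =>
    (Measure.measurable_coe (hSmeas s s.2)).comp measurable_subtype_coe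
  have hinj : Function.Injective masses := fun p q hpq =>
    ProbabilityMeasure.toMeasure_injective <| ext_of_generate_finite S
      (by rw [generateFrom_generateSetAlgebra_eq, generateFrom_countableGeneratingSet])
      (isSetAlgebra_generateSetAlgebra.isSetRing.isSetSemiring.isPiSystem)
      (fun s hs => congrFun hpq ⟨s, hs⟩) (by rw [measure_univ, measure_univ])
  obtain ⟨T, hTc, hTm, hT⟩ := (countablySeparated_def (α := S → ℝ≥0∞)).1 inferInstance
  refine ⟨(masses ⁻¹' ·) '' T, hTc.image _, ?_, fun p _ q _ h => hinj (hT _ trivial _ trivial ?_)⟩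
  · rintro _ ⟨t, ht, rfl⟩
    exact hmasses (hTm t ht)
  · exact fun t ht => h _ (mem_image_of_mem _ ht)

lemma measurableSpace_eq_of_le {α : Type*} {m₁ m₂ : MeasurableSpace α} (hle : m₂ ≤ m₁)
    (h₁ : @StandardBorelSpace α m₁) (h₂ : @CountablySeparated α m₂) : m₁ = m₂ := by
  refine le_antisymm (fun s hs => ?_) hle
  have hid : @MeasurableEmbedding _ _ m₁ m₂ id :=
    @Measurable.measurableEmbedding _ _ m₂ id h₂ m₁ h₁ (measurable_id'' hle) Function.injective_id
  simpa only [image_id] using @MeasurableEmbedding.measurableSet_image' _ _ m₁ m₂ id hid s hs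

lemma polishSpace_of_compactSpace_of_metrizableSpace (K : Type*) [TopologicalSpace K]
    [CompactSpace K] [TopologicalSpace.MetrizableSpace K] : PolishSpace K := by
  let := TopologicalSpace.metrizableSpaceMetric K
  infer_instance

variable {K : Type*} [TopologicalSpace K] [CompactSpace K] [TopologicalSpace.MetrizableSpace K]
  [MeasurableSpace K] [BorelSpace K]

instance : PolishSpace (ProbabilityMeasure K) := by
  have := polishSpace_of_compactSpace_of_metrizableSpace K
  exact polishSpace_of_compactSpace_of_metrizableSpace _

instance : BorelSpace (ProbabilityMeasure K) := by
  have := polishSpace_of_compactSpace_of_metrizableSpace K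
  have hmeas : Measurable[borel (ProbabilityMeasure K)]
      (fun Q : ProbabilityMeasure K => (Q : Measure K)) := by
    refine @Measurable.measure_of_isPiSystem_of_isProbabilityMeasure _ _ (borel _) _ _ _
      {s : Set K | IsOpen s} BorelSpace.measurable_eq isPiSystem_isOpen fun s hs => ?_
    borelize (ProbabilityMeasure K)
    exact (lowerSemicontinuous_iff_le_liminf.2 fun Q =>
      ProbabilityMeasure.le_liminf_measure_open_of_tendsto tendsto_id hs).measurable
  have hstd : @StandardBorelSpace (ProbabilityMeasure K) (borel _) := by
    borelize (ProbabilityMeasure K)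
    infer_instance
  exact ⟨(measurableSpace_eq_of_le (measurable_iff_comap_le.1 hmeas) hstd
    (countablySeparated_probabilityMeasure K)).symm⟩

lemma measurableEmbedding_measure_map {Y Y' : Type*} [MeasurableSpace Y] [MeasurableSpace Y']
    {e : Y → Y'} (he : MeasurableEmbedding e) :
    MeasurableEmbedding (Measure.map e : Measure Y → Measure Y') := by
  have hrange : range (Measure.map e : Measure Y → Measure Y') = {Q | Q (range e)ᶜ = 0} := by
    refine Subset.antisymm ?_ fun Q hQ => ⟨Q.comap e, ?_⟩
    · rintro _ ⟨p, rfl⟩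
      simp [he.map_apply]
    · rw [he.map_comap, Measure.restrict_eq_self_of_ae_mem]
      exact mem_ae_iff.2 hQ
  refine .of_measurable_inverse (g := Measure.comap e) (Measure.measurable_map e he.measurable) ?_
    (Measure.measurable_of_measurable_coe _ fun s hs => ?_) he.comap_map
  · rw [hrange]
    exact Measure.measurable_coe he.measurableSet_range.compl (measurableSet_singleton 0)
  · simp only [he.comap_apply]
    exact Measure.measurable_coe (he.measurableSet_image.2 hs)

lemma measurableEmbedding_probabilityMeasure_map {Y Y' : Type*} [MeasurableSpace Y]
    [MeasurableSpace Y'] {e : Y → Y'} (he : MeasurableEmbedding e) :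
    MeasurableEmbedding fun p : ProbabilityMeasure Y => p.map he.measurable.aemeasurable where
  injective p q hpq := ProbabilityMeasure.toMeasure_injective
    (he.map_injective (congrArg ProbabilityMeasure.toMeasure hpq))
  measurable := ((Measure.measurable_map e he.measurable).comp measurable_subtype_coe).subtype_mk
  measurableSet_image' s hs := by
    rw [← (measurableEmbedding_toMeasure Y').measurableSet_image, image_image]
    exact ((measurableEmbedding_measure_map he).comp
      (measurableEmbedding_toMeasure Y)).measurableSet_image.2 hs

lemma standardBorelSpace_of_measurableEmbedding {α β : Type*} [MeasurableSpace α]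
    [MeasurableSpace β] [StandardBorelSpace β] {f : α → β} (hf : MeasurableEmbedding f) :
    StandardBorelSpace α := by
  have := hf.measurableSet_range.standardBorel
  let := upgradeStandardBorel (range f)
  let := TopologicalSpace.induced hf.equivRange inferInstance
  refine ⟨this, ⟨?_⟩, hf.equivRange.toEquiv.polishSpace_induced⟩
  rw [← hf.equivRange.measurableEmbedding.comap_eq, borel_comap,
    ← eq_borel_upgradeStandardBorel (range f)]

instance {Y : Type*} [MeasurableSpace Y] [StandardBorelSpace Y] :
    StandardBorelSpace (ProbabilityMeasure Y) :=
  standardBorelSpace_of_measurableEmbedding <| measurableEmbedding_probabilityMeasure_map <|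
    EReal.measurableEmbedding_coe.comp (measurableEmbedding_embeddingReal Y)

end MeasuresOnMeasures

section Analytic

lemma exists_forall_lt_measure_image_le {X : Type*} [MeasurableSpace X] (μ : Measure X)
    (f : (ℕ → ℕ) → X) {t : ℝ≥0∞} (ht : t < μ (range f)) :
    ∃ b : ℕ → ℕ, ∀ n, t < μ (f '' {x | ∀ i < n, x i ≤ b i}) := by
  have hstep : ∀ (n : ℕ) (A : {A : Set (ℕ → ℕ) // t < μ (f '' A)}),
      ∃ m, t < μ (f '' (A.1 ∩ {x | x n ≤ m})) := by
    rintro n ⟨A, hA⟩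
    have hunion : f '' A = ⋃ m, f '' (A ∩ {x | x n ≤ m}) := by
      rw [← image_iUnion, ← inter_iUnion,
        iUnion_eq_univ_iff.2 fun x => ⟨x n, (le_refl (x n) : _)⟩, inter_univ]
    have hmono : Monotone fun m => f '' (A ∩ {x | x n ≤ m}) := fun m m' hm =>
      image_mono (inter_subset_inter_right _ fun x (hx : x n ≤ m) => hx.trans hm)
    rw [hunion, hmono.measure_iUnion] at hA
    exact lt_iSup_iff.1 hA
  choose g hg using hstep
  let A : ℕ → {A : Set (ℕ → ℕ) // t < μ (f '' A)} :=
    Nat.rec ⟨univ, by rwa [image_univ]⟩ fun n A => ⟨A.1 ∩ {x | x n ≤ g n A}, hg n A⟩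
  have hA : ∀ n, {x : ℕ → ℕ | ∀ i < n, x i ≤ g i (A i)} = (A n).1 := by
    intro n
    induction n with
    | zero => simp [A]
    | succ n ih => simp only [Nat.forall_lt_succ_right, ofPred_and, ih]; rfl
  exact ⟨fun n => g n (A n), fun n => (hA n).symm ▸ (A n).2⟩

lemma exists_isCompact_le_measure_image {X : Type*} [TopologicalSpace X] [MeasurableSpace X]
    (μ : Measure X) [μ.OuterRegular] {f : (ℕ → ℕ) → X} (hf : Continuous f) {t : ℝ≥0∞}
    (ht : t < μ (range f)) :
    ∃ L : Set (ℕ → ℕ), IsCompact L ∧ t ≤ μ (f '' L) := by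
  obtain ⟨b, hb⟩ := exists_forall_lt_measure_image_le μ f ht
  have hL : IsCompact (Set.pi univ fun i => Iic (b i)) :=
    isCompact_univ_pi fun i => (finite_Iic (b i)).isCompact
  refine ⟨_, hL, ?_⟩
  rw [Set.measure_eq_iInf_isOpen]
  refine le_iInf₂ fun V hV => le_iInf fun hVo => ?_
  let := @PiNat.metricSpaceNatNat
  obtain ⟨δ, hδ, hLδ⟩ := hL.exists_thickening_subset_open (hVo.preimage hf) (image_subset_iff.1 hV)
  obtain ⟨n, hn⟩ := exists_pow_lt_of_lt_one hδ (by norm_num : (1 / 2 : ℝ) < 1)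
  refine (hb n).le.trans (measure_mono ?_)
  rintro _ ⟨x, hx, rfl⟩
  refine hLδ (Metric.mem_thickening_iff.2
    ⟨fun i => min (x i) (b i), fun i _ => mem_Iic.2 (min_le_right _ _), lt_of_le_of_lt ?_ hn⟩)
  exact PiNat.mem_cylinder_iff_dist_le.1 fun i hi => (min_eq_left (hx i hi)).symm

lemma nullMeasurableSet_of_analyticSet {X : Type*} [TopologicalSpace X] [T2Space X]
    [MeasurableSpace X] [OpensMeasurableSpace X] (μ : Measure X) [IsFiniteMeasure μ]
    [μ.OuterRegular] {s : Set X} (hs : AnalyticSet s) : NullMeasurableSet s μ := by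
  rw [AnalyticSet] at hs
  obtain rfl | ⟨f, hf, rfl⟩ := hs
  · exact nullMeasurableSet_empty
  have hinner : ∀ t < μ (range f), ∃ L ⊆ range f, MeasurableSet L ∧ t ≤ μ L := by
    intro t ht
    obtain ⟨L, hL, htL⟩ := exists_isCompact_le_measure_image μ hf ht
    exact ⟨f '' L, image_subset_range _ _, (hL.image hf).measurableSet, htL⟩
  obtain ⟨L, hLs, hLm, hL⟩ : ∃ L ⊆ range f, MeasurableSet L ∧ μ (range f) ≤ μ L := by
    by_cases h0 : μ (range f) = 0
    · exact ⟨∅, empty_subset _, MeasurableSet.empty, by simp [h0]⟩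
    obtain ⟨u, -, hu, hut⟩ := exists_seq_strictMono_tendsto' (pos_iff_ne_zero.2 h0)
    choose L hLs hLm huL using fun n => hinner (u n) (hu n).2
    exact ⟨⋃ n, L n, iUnion_subset hLs, MeasurableSet.iUnion hLm,
      le_of_tendsto' hut fun n => (huL n).trans (measure_mono (subset_iUnion L n))⟩
  exact hLm.nullMeasurableSet.congr
    (ae_eq_of_subset_of_measure_ge hLs hL hLm.nullMeasurableSet (measure_ne_top _ _))

lemma aemeasurable_iInf_section {X W β : Type*} [MeasurableSpace X] [StandardBorelSpace X]
    [MeasurableSpace W] [StandardBorelSpace W] [CompleteLinearOrder β] [TopologicalSpace β]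
    [OrderTopology β] [SecondCountableTopology β] [MeasurableSpace β] [BorelSpace β]
    (μ : Measure X) [IsFiniteMeasure μ] {S : Set (X × W)} (hS : MeasurableSet S) {f : X × W → β}
    (hf : Measurable f) :
    AEMeasurable (fun x => ⨅ w ∈ {w | (x, w) ∈ S}, f (x, w)) μ := by
  let := upgradeStandardBorel X
  have hnull : ∀ a,
      NullMeasurableSet ((fun x => ⨅ w ∈ {w | (x, w) ∈ S}, f (x, w)) ⁻¹' Iio a) μ := by
    intro a
    have himage : (fun x => ⨅ w ∈ {w | (x, w) ∈ S}, f (x, w)) ⁻¹' Iio a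
        = Prod.fst '' (S ∩ f ⁻¹' Iio a) := by
      ext x
      simp [iInf_lt_iff]
    rw [himage]
    exact nullMeasurableSet_of_analyticSet μ
      ((hS.inter (hf measurableSet_Iio)).analyticSet_image measurable_fst)
  exact NullMeasurable.aemeasurable (measurable_of_Iio hnull)

end Analytic

section ExtendedIntegral

variable {Ω : Type*} [MeasurableSpace Ω] {P : Measure Ω}

lemma epos_eq_toENNReal : epos = EReal.toENNReal := rfl

lemma eInt_mono_ae {f g : Ω → EReal} (h : f ≤ᵐ[P] g) : eInt f P ≤ eInt g P :=
  EReal.sub_le_sub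
    (EReal.coe_ennreal_le_coe_ennreal_iff.2
      (lintegral_mono_ae (h.mono fun _ hω => EReal.toENNReal_le_toENNReal hω)))
    (EReal.coe_ennreal_le_coe_ennreal_iff.2
      (lintegral_mono_ae (h.mono fun _ hω =>
        EReal.toENNReal_le_toENNReal (EReal.neg_le_neg_iff.2 hω))))

lemma eInt_congr_ae {f g : Ω → EReal} (h : f =ᵐ[P] g) : eInt f P = eInt g P :=
  le_antisymm (eInt_mono_ae h.le) (eInt_mono_ae h.symm.le)

lemma eInt_map_s5 {Ω' : Type*} [MeasurableSpace Ω'] {T : Ω → Ω'} (hT : AEMeasurable T P)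
    {f : Ω' → EReal} (hf : AEMeasurable f (P.map T)) :
    eInt f (P.map T) = eInt (f ∘ T) P := by
  have hneg : AEMeasurable (fun ω => -f ω) (P.map T) := hf.neg
  rw [eInt, epos_eq_toENNReal, lintegral_map' hf.ereal_toENNReal hT,
    lintegral_map' hneg.ereal_toENNReal hT]
  rfl

lemma eInt_coe_real {g : Ω → ℝ} (hg : Integrable g P) :
    eInt (fun ω => (g ω : EReal)) P = ((∫ ω, g ω ∂P : ℝ) : EReal) := by
  have hneg : ∫⁻ ω, ENNReal.ofReal (-g ω) ∂P ≠ ⊤ := hg.neg.lintegral_lt_top.ne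
  rw [integral_eq_lintegral_pos_part_sub_lintegral_neg_part hg, EReal.coe_sub,
    EReal.coe_ennreal_toReal hg.lintegral_lt_top.ne, EReal.coe_ennreal_toReal hneg]
  rfl

lemma toENNReal_neg_coe_ennreal (a : ℝ≥0∞) : (-(a : EReal)).toENNReal = 0 := by
  simp

lemma eInt_coe_ennreal (f : Ω → ℝ≥0∞) :
    eInt (fun ω => (f ω : EReal)) P = ((∫⁻ ω, f ω ∂P : ℝ≥0∞) : EReal) := by
  simp only [eInt, epos_eq_toENNReal, EReal.toENNReal_coe, toENNReal_neg_coe_ennreal,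
    lintegral_zero, EReal.coe_ennreal_zero, sub_zero]

lemma toENNReal_coe_add_add_eq (a : ℝ) (e : EReal) :
    (a + e).toENNReal + (ENNReal.ofReal (-a) + (-e).toENNReal)
      = (-(a + e)).toENNReal + (ENNReal.ofReal a + e.toENNReal) := by
  induction e with
  | bot => simp
  | top => simp
  | coe b =>
    rw [← EReal.coe_add, ← EReal.coe_neg, ← EReal.coe_neg]
    simp only [EReal.real_coe_toENNReal]
    rw [← ENNReal.toReal_eq_toReal_iff' (by finiteness) (by finiteness)]
    simp only [ENNReal.toReal_add, ne_eq, ENNReal.ofReal_ne_top, ENNReal.add_eq_top, or_self,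
      not_false_eq_true, ENNReal.toReal_ofReal']
    linarith [max_zero_sub_max_neg_zero_eq_self (a + b), max_zero_sub_max_neg_zero_eq_self a,
      max_zero_sub_max_neg_zero_eq_self b]

lemma ereal_coe_sub_coe_eq_add {a b a' b' c d : ℝ≥0∞} (hb : b ≠ ⊤) (hb' : b' ≠ ⊤) (hc : c ≠ ⊤)
    (hd : d ≠ ⊤) (h : a' + (d + b) = b' + (c + a)) :
    (a' : EReal) - b' = (c.toReal - d.toReal : ℝ) + (a - b : EReal) := by
  lift b to ℝ≥0 using hb
  lift b' to ℝ≥0 using hb'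
  lift c to ℝ≥0 using hc
  lift d to ℝ≥0 using hd
  obtain rfl | ha := eq_or_ne a ⊤
  · obtain rfl : a' = ⊤ := by simpa using h
    rw [EReal.coe_ennreal_top,
      EReal.top_sub (EReal.coe_ennreal_eq_top_iff.not.2 ENNReal.coe_ne_top),
      EReal.top_sub (EReal.coe_ennreal_eq_top_iff.not.2 ENNReal.coe_ne_top), EReal.coe_add_top]
  have ha' : a' ≠ ⊤ := fun htop => by simp [htop, ha, eq_comm] at h
  lift a to ℝ≥0 using ha
  lift a' to ℝ≥0 using ha'
  have hreal : (a' : ℝ) + (d + b) = b' + (c + a) := by exact_mod_cast h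
  simp only [EReal.coe_nnreal_eq_coe_real, ← EReal.coe_sub, ← EReal.coe_add,
    ENNReal.coe_toReal, EReal.coe_eq_coe_iff]
  linarith

lemma eInt_coe_add {f : Ω → EReal} {g : Ω → ℝ} (hf : AEMeasurable f P) (hg : Integrable g P)
    (hneg : ∫⁻ ω, (-f ω).toENNReal ∂P ≠ ⊤) :
    eInt (fun ω => (g ω : EReal) + f ω) P = ((∫ ω, g ω ∂P : ℝ) : EReal) + eInt f P := by
  have hg' : AEMeasurable (fun ω => (g ω : EReal)) P := hg.aemeasurable.coe_real_ereal
  have hgneg : AEMeasurable (fun ω => -g ω) P := hg.aemeasurable.neg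
  have hsum : AEMeasurable (fun ω => (g ω : EReal) + f ω) P := hg'.add hf
  have hsumneg : AEMeasurable (fun ω => -((g ω : EReal) + f ω)) P := hsum.neg
  have hpos := hg.lintegral_lt_top.ne
  have hneg' : ∫⁻ ω, ENNReal.ofReal (-g ω) ∂P ≠ ⊤ := hg.neg.lintegral_lt_top.ne
  have hbalance : ∫⁻ ω, (g ω + f ω).toENNReal ∂P
        + (∫⁻ ω, ENNReal.ofReal (-g ω) ∂P + ∫⁻ ω, (-f ω).toENNReal ∂P)
      = ∫⁻ ω, (-(g ω + f ω)).toENNReal ∂P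
        + (∫⁻ ω, ENNReal.ofReal (g ω) ∂P + ∫⁻ ω, (f ω).toENNReal ∂P) := by
    rw [← lintegral_add_left' hgneg.ennreal_ofReal,
      ← lintegral_add_left' hg.aemeasurable.ennreal_ofReal,
      ← lintegral_add_left' hsum.ereal_toENNReal,
      ← lintegral_add_left' hsumneg.ereal_toENNReal]
    exact lintegral_congr fun ω => toENNReal_coe_add_add_eq (g ω) (f ω)
  have hsumneg_ne : ∫⁻ ω, (-(g ω + f ω)).toENNReal ∂P ≠ ⊤ := by
    refine ne_top_of_le_ne_top (ENNReal.add_ne_top.2 ⟨hneg', hneg⟩) ?_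
    rw [← lintegral_add_left' hgneg.ennreal_ofReal]
    refine lintegral_mono fun ω => ?_
    rw [EReal.neg_add (Or.inl (EReal.coe_ne_bot _)) (Or.inl (EReal.coe_ne_top _)),
      sub_eq_add_neg]
    exact EReal.toENNReal_add_le
  rw [integral_eq_lintegral_pos_part_sub_lintegral_neg_part hg]
  exact ereal_coe_sub_coe_eq_add hneg hsumneg_ne hpos hneg' hbalance

lemma coe_integral_add_eInt_le {f : Ω → EReal} {g : Ω → ℝ} (hf : AEMeasurable f P)
    (hg : Integrable g P) :
    ((∫ ω, g ω ∂P : ℝ) : EReal) + eInt f P ≤ eInt (fun ω => (g ω : EReal) + f ω) P := by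
  by_cases hneg : ∫⁻ ω, (-f ω).toENNReal ∂P = ⊤
  · simp [eInt, epos_eq_toENNReal, hneg]
  · exact (eInt_coe_add hf hg hneg).ge

end ExtendedIntegral

section Minimax

variable {Z ι : Type*} [MeasurableSpace Z]

/-- The vectors `t ≥ 0` such that some probability measure `Q` satisfies `∫ h i dQ ≤ t i` for
all `i`; Hahn–Banach separates from it any `b` violating this for every `Q`. -/
def integralEpigraph (h : ι → Z → ℝ≥0∞) : Set (ι → ℝ) :=
  {t | ∃ Q : ProbabilityMeasure Z, ∀ i, 0 ≤ t i ∧ ∫⁻ z, h i z ∂Q ≤ ENNReal.ofReal (t i)}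

lemma convex_integralEpigraph (h : ι → Z → ℝ≥0∞) : Convex ℝ (integralEpigraph h) := by
  rintro t ⟨Q, hQ⟩ t' ⟨Q', hQ'⟩ a b ha hb hab
  let mix : Measure Z := ENNReal.ofReal a • (Q : Measure Z) + ENNReal.ofReal b • (Q' : Measure Z)
  have hmix : IsProbabilityMeasure mix := ⟨by simp [mix, ← ENNReal.ofReal_add ha hb, hab]⟩
  refine ⟨⟨mix, hmix⟩, fun i =>
    ⟨add_nonneg (mul_nonneg ha (hQ i).1) (mul_nonneg hb (hQ' i).1), ?_⟩⟩
  calc ∫⁻ z, h i z ∂mix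
    _ = ENNReal.ofReal a * ∫⁻ z, h i z ∂Q + ENNReal.ofReal b * ∫⁻ z, h i z ∂Q' := by
        rw [lintegral_add_measure, lintegral_smul_measure, lintegral_smul_measure, smul_eq_mul,
          smul_eq_mul]
    _ ≤ ENNReal.ofReal a * ENNReal.ofReal (t i) + ENNReal.ofReal b * ENNReal.ofReal (t' i) := by
        gcongr
        exacts [(hQ i).2, (hQ' i).2]
    _ = ENNReal.ofReal ((a • t + b • t') i) := by
        rw [← ENNReal.ofReal_mul ha, ← ENNReal.ofReal_mul hb,
          ← ENNReal.ofReal_add (mul_nonneg ha (hQ i).1) (mul_nonneg hb (hQ' i).1)]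
        rfl

variable {h : ι → Z → ℝ≥0∞}

lemma mem_integralEpigraph_of_le {t t' : ι → ℝ} (ht : t ∈ integralEpigraph h) (htt' : t ≤ t') :
    t' ∈ integralEpigraph h := by
  obtain ⟨Q, hQ⟩ := ht
  exact ⟨Q, fun i => ⟨(hQ i).1.trans (htt' i),
    (hQ i).2.trans (ENNReal.ofReal_le_ofReal (htt' i))⟩⟩

lemma nonneg_of_forall_mem_integralEpigraph [Fintype ι] {t w : ι → ℝ} {u : ℝ}
    (ht : t ∈ integralEpigraph h) (hw : ∀ t ∈ integralEpigraph h, u < ∑ i, w i * t i) (i : ι) :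
    0 ≤ w i := by
  classical
  by_contra! hi
  obtain ⟨n, hn⟩ := exists_nat_gt ((∑ j, w j * t j - u) / -w i)
  have hlt := hw (t + Pi.single i (n : ℝ)) (mem_integralEpigraph_of_le ht
    (le_add_of_nonneg_right (Pi.single_nonneg.2 n.cast_nonneg)))
  simp only [Pi.add_apply, mul_add, Finset.sum_add_distrib, Pi.single_apply, mul_ite, mul_zero,
    Finset.sum_ite_eq', Finset.mem_univ, if_true] at hlt
  rw [div_lt_iff₀ (neg_pos.2 hi)] at hn
  linarith

variable [TopologicalSpace Z] [BorelSpace Z]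

lemma exists_mem_integralEpigraph_sum_le [Fintype ι] (hh : ∀ i, LowerSemicontinuous (h i))
    {w : ι → ℝ} (hw : ∀ i, 0 < w i) {c : ℝ} (hc : 0 ≤ c) {z : Z}
    (hz : ∑ i, ENNReal.ofReal (w i) * h i z ≤ ENNReal.ofReal c) :
    ∃ t ∈ integralEpigraph h, ∑ i, w i * t i ≤ c := by
  have hw0 : ∀ i, ENNReal.ofReal (w i) ≠ 0 := fun i => (ENNReal.ofReal_pos.2 (hw i)).ne'
  have hfin : ∀ i, h i z ≠ ⊤ := fun i htop => by
    have hle := (Finset.single_le_sum (f := fun i => ENNReal.ofReal (w i) * h i z)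
      (fun _ _ => zero_le) (Finset.mem_univ i)).trans hz
    simp [htop, ENNReal.mul_top (hw0 i)] at hle
  refine ⟨fun i => (h i z).toReal, ⟨⟨Measure.dirac z, inferInstance⟩, fun i =>
    ⟨ENNReal.toReal_nonneg, ?_⟩⟩, ?_⟩
  · rw [ProbabilityMeasure.coe_mk, lintegral_dirac' z (hh i).measurable,
      ENNReal.ofReal_toReal (hfin i)]
  · have hreal := ENNReal.toReal_le_of_le_ofReal hc hz
    rw [ENNReal.toReal_sum fun i _ => ENNReal.mul_ne_top ENNReal.ofReal_ne_top (hfin i)] at hreal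
    simpa only [ENNReal.toReal_mul, ENNReal.toReal_ofReal (hw _).le] using hreal

variable [CompactSpace Z] [TopologicalSpace.MetrizableSpace Z]

lemma isClosed_integralEpigraph (hh : ∀ i, LowerSemicontinuous (h i)) :
    IsClosed (integralEpigraph h) := by
  have hgraph : IsClosed {q : ProbabilityMeasure Z × (ι → ℝ) |
      ∀ i, 0 ≤ q.2 i ∧ ∫⁻ z, h i z ∂q.1 ≤ ENNReal.ofReal (q.2 i)} := by
    simp only [ofPred_forall, ofPred_and]
    refine isClosed_iInter fun i => (isClosed_le continuous_const (by fun_prop)).inter ?_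
    exact (lowerSemicontinuous_lintegral (hh i)).isClosed_epigraph.preimage
      (continuous_fst.prodMk (ENNReal.continuous_ofReal.comp (by fun_prop)))
  convert isClosedMap_snd_of_compactSpace _ hgraph using 1
  ext t
  simp [integralEpigraph]

lemma mem_integralEpigraph_of_forall_weights [Fintype ι] (hh : ∀ i, LowerSemicontinuous (h i))
    {b : ι → ℝ} (hb0 : ∀ i, 0 ≤ b i)
    (hb : ∀ w : ι → ℝ, (∀ i, 0 < w i) → ∀ ε > 0,
      ∃ z, ∑ i, ENNReal.ofReal (w i) * h i z ≤ ENNReal.ofReal (∑ i, w i * b i + ε)) :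
    b ∈ integralEpigraph h := by
  classical
  by_contra hbS
  have happrox : ∀ w : ι → ℝ, (∀ i, 0 < w i) → ∀ ε > 0,
      ∃ t ∈ integralEpigraph h, ∑ i, w i * t i ≤ ∑ i, w i * b i + ε := fun w hw ε hε =>
    let ⟨_, hz⟩ := hb w hw ε hε
    exists_mem_integralEpigraph_sum_le hh hw
      (add_nonneg (Finset.sum_nonneg fun i _ => mul_nonneg (hw i).le (hb0 i)) hε.le) hz
  obtain ⟨f, u, hfb, hfS⟩ := geometric_hahn_banach_point_closed (convex_integralEpigraph h)
    (isClosed_integralEpigraph hh) hbS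
  obtain ⟨w, hfw⟩ : ∃ w : ι → ℝ, ∀ t, f t = ∑ i, w i * t i :=
    ⟨_, fun t => (f.toLinearMap.pi_apply_eq_sum_univ t).trans
      (Finset.sum_congr rfl fun i _ => mul_comm _ _)⟩
  simp only [hfw] at hfb hfS
  obtain ⟨t₁, ht₁, -⟩ := happrox 1 (fun _ => one_pos) 1 one_pos
  have hw : ∀ i, 0 ≤ w i := nonneg_of_forall_mem_integralEpigraph ht₁ hfS
  obtain ⟨δ, hδ, hδu⟩ := exists_pos_mul_lt (sub_pos.2 hfb) (∑ i, b i + 1)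
  obtain ⟨t, ht, hle⟩ := happrox (fun i => w i + δ) (fun i => by linarith [hw i]) δ hδ
  have hbase := hfS t ht
  have hmono : ∑ i, w i * t i ≤ ∑ i, (w i + δ) * t i := by
    obtain ⟨Q, hQ⟩ := ht
    exact Finset.sum_le_sum fun i _ =>
      mul_le_mul_of_nonneg_right (le_add_of_nonneg_right hδ.le) (hQ i).1
  have hexpand : ∑ i, (w i + δ) * b i = ∑ i, w i * b i + (∑ i, b i) * δ := by
    simp only [add_mul, Finset.sum_add_distrib, Finset.sum_mul, mul_comm δ]
  linarith

theorem exists_lintegral_le_of_forall_weights (hh : ∀ i, LowerSemicontinuous (h i)) {b : ι → ℝ}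
    (hb0 : ∀ i, 0 ≤ b i) (i₀ : ι)
    (hb : ∀ s : Finset ι, i₀ ∈ s → ∀ w : ι → ℝ, (∀ i, 0 < w i) → ∀ ε > 0,
      ∃ z, ∑ i ∈ s, ENNReal.ofReal (w i) * h i z ≤ ENNReal.ofReal (∑ i ∈ s, w i * b i + ε)) :
    ∃ Q : ProbabilityMeasure Z, ∀ i, ∫⁻ z, h i z ∂Q ≤ ENNReal.ofReal (b i) := by
  classical
  suffices (⋂ i, {Q : ProbabilityMeasure Z | ∫⁻ z, h i z ∂Q ≤ ENNReal.ofReal (b i)}).Nonempty by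
    simpa [Set.Nonempty] using this
  refine CompactSpace.iInter_nonempty
    (fun i => (lowerSemicontinuous_lintegral (hh i)).isClosed_preimage _) fun s => ?_
  obtain ⟨Q, hQ⟩ := mem_integralEpigraph_of_forall_weights
    (h := fun i : ↥(insert i₀ s) => h i) (fun i => hh i) (fun i => hb0 i) fun w hw ε hε => by
      let w' : ι → ℝ := fun i => if hi : i ∈ insert i₀ s then w ⟨i, hi⟩ else 1
      have hww' : ∀ i : ↥(insert i₀ s), w' i = w i := fun i => dif_pos i.2
      have hw' : ∀ i, 0 < w' i := fun i => by
        dsimp only [w']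
        split_ifs with hi
        exacts [hw ⟨i, hi⟩, one_pos]
      obtain ⟨z, hz⟩ := hb _ (Finset.mem_insert_self i₀ s) w' hw' ε hε
      rw [← Finset.sum_coe_sort _ fun i => ENNReal.ofReal (w' i) * h i z,
        ← Finset.sum_coe_sort _ fun i => w' i * b i] at hz
      simp only [hww'] at hz
      exact ⟨z, hz⟩
  exact ⟨Q, mem_iInter₂.2 fun i hi => (hQ ⟨i, Finset.mem_insert_of_mem hi⟩).2⟩

end Minimax

section LinearProgram

variable {Z V A : Type*} [AddCommGroup V] [Module ℝ V] {j : A → Z} {ev : A → V →ₗ[ℝ] ℝ}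
  {ℓ : V →ₗ[ℝ] ℝ} {c : Z → ℝ≥0∞} {α : ℝ}

lemma nonneg_of_dual_le (hdual : ∀ v, (∀ a, ENNReal.ofReal (ev a v) ≤ c (j a)) → ℓ v ≤ α) {v : V}
    (hv : ∀ a, 0 ≤ ev a v) : 0 ≤ ℓ v := by
  by_contra! hneg
  obtain ⟨n, hn⟩ := exists_nat_gt (α / -ℓ v)
  have hle := hdual (-(n : ℝ) • v) fun a => by
    rw [map_smul, smul_eq_mul, ENNReal.ofReal_of_nonpos
      (mul_nonpos_of_nonpos_of_nonneg (neg_nonpos.2 n.cast_nonneg) (hv a))]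
    exact zero_le
  rw [div_lt_iff₀ (neg_pos.2 hneg)] at hn
  rw [map_smul, smul_eq_mul] at hle
  linarith

/-- If no primal point satisfied the weighted constraint, then subtracting the weighted test vectors
from a large multiple of `e` would give a dual feasible vector beating the bound `α`. -/
lemma exists_weighted_sum_le_of_dual_le {I : Type*} {e : V} (he : ∀ a, ev a e = 1) (hℓe : ℓ e = 1)
    (hdual : ∀ v, (∀ a, ENNReal.ofReal (ev a v) ≤ c (j a)) → ℓ v ≤ α) (s : Finset I)
    {h : I → Z → ℝ≥0∞} {v : I → V}
    (hv : ∀ i a, 0 ≤ ev a (v i) ∧ h i (j a) ≤ ENNReal.ofReal (ev a (v i)))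
    {w₀ : ℝ} (hw₀ : 0 < w₀) {w : I → ℝ} (hw : ∀ i, 0 < w i) {ε : ℝ} (hε : 0 < ε) :
    ∃ z, ENNReal.ofReal w₀ * c z + ∑ i ∈ s, ENNReal.ofReal (w i) * h i z
      ≤ ENNReal.ofReal (w₀ * α + ∑ i ∈ s, w i * ℓ (v i) + ε) := by
  by_contra! hlt
  set T : ℝ := w₀ * α + ∑ i ∈ s, w i * ℓ (v i) + ε
  let u : V := w₀⁻¹ • (T • e - ∑ i ∈ s, w i • v i)
  have hfeas : ∀ a, ENNReal.ofReal (ev a u) ≤ c (j a) := fun a => by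
    have hsum : ∑ i ∈ s, ENNReal.ofReal (w i) * h i (j a)
        ≤ ENNReal.ofReal (∑ i ∈ s, w i * ev a (v i)) := by
      rw [ENNReal.ofReal_sum_of_nonneg fun i _ => mul_nonneg (hw i).le (hv i a).1]
      refine Finset.sum_le_sum fun i _ => ?_
      rw [ENNReal.ofReal_mul (hw i).le]
      exact mul_le_mul_right (hv i a).2 _
    have hevu : ev a u = w₀⁻¹ * (T - ∑ i ∈ s, w i * ev a (v i)) := by simp [u, he, map_sum]
    rw [hevu, inv_mul_eq_div, ENNReal.ofReal_div_of_pos hw₀, ENNReal.div_le_iff'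
      (ENNReal.ofReal_pos.2 hw₀).ne' ENNReal.ofReal_ne_top, ENNReal.ofReal_sub _
      (Finset.sum_nonneg fun i _ => mul_nonneg (hw i).le (hv i a).1), tsub_le_iff_right]
    exact (hlt (j a)).le.trans (by gcongr)
  have hle := hdual u hfeas
  have hℓu : ℓ u = α + w₀⁻¹ * ε := by
    simp only [u, map_smul, map_sub, map_sum, hℓe, smul_eq_mul, T]
    field_simp
    ring
  linarith [mul_pos (inv_pos.2 hw₀) hε]

theorem exists_lintegral_le_of_dual_le [MeasurableSpace Z] [TopologicalSpace Z] [BorelSpace Z]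
    [CompactSpace Z] [TopologicalSpace.MetrizableSpace Z] {e : V} (he : ∀ a, ev a e = 1)
    (hℓe : ℓ e = 1) (hc : LowerSemicontinuous c)
    (hdual : ∀ v, (∀ a, ENNReal.ofReal (ev a v) ≤ c (j a)) → ℓ v ≤ α) :
    ∃ Q : ProbabilityMeasure Z, ∫⁻ z, c z ∂Q ≤ ENNReal.ofReal α ∧
      ∀ h, LowerSemicontinuous h → ∀ v,
        (∀ a, 0 ≤ ev a v ∧ h (j a) ≤ ENNReal.ofReal (ev a v)) →
        ∫⁻ z, h z ∂Q ≤ ENNReal.ofReal (ℓ v) := by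
  have hα : 0 ≤ α := by simpa using hdual 0 (by simp)
  let I := {q : (Z → ℝ≥0∞) × V // LowerSemicontinuous q.1 ∧
    ∀ a, 0 ≤ ev a q.2 ∧ q.1 (j a) ≤ ENNReal.ofReal (ev a q.2)}
  obtain ⟨Q, hQ⟩ := exists_lintegral_le_of_forall_weights (ι := Option I)
    (h := fun i => i.elim c fun q => q.1.1) (b := fun i => i.elim α fun q => ℓ q.1.2)
    (Option.rec hc fun q => q.2.1) (Option.rec hα fun q => nonneg_of_dual_le hdual fun a =>
      (q.2.2 a).1) none fun s hs w hw ε hε => by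
    classical
    obtain ⟨z, hz⟩ := exists_weighted_sum_le_of_dual_le he hℓe hdual (Finset.eraseNone s)
      (fun q : I => q.2.2) (hw none) (fun q => hw (some q)) hε
    rw [← Finset.insert_eq_of_mem hs, ← Finset.insertNone_eraseNone]
    simp only [Finset.sum_insertNone]
    exact ⟨z, hz⟩
  exact ⟨Q, hQ none, fun h hh v hv => hQ (some ⟨(h, v), hh, hv⟩)⟩

end LinearProgram

section Growth

variable {X : Type*} [PseudoMetricSpace X]

/-- The growth class `Φ_r` as a vector space. -/
def growthSubmodule (r : ℝ) (x₀ : X) : Submodule ℝ (X → ℝ) where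
  carrier := PhiR r x₀
  zero_mem' := ⟨continuous_const, 0, fun x => by simp⟩
  add_mem' := by
    rintro φ ψ ⟨hφ, L, hL⟩ ⟨hψ, M, hM⟩
    exact ⟨hφ.add hψ, L + M, fun x => ((abs_add_le _ _).trans (add_le_add (hL x) (hM x))).trans_eq
      (add_mul L M _).symm⟩
  smul_mem' := by
    rintro c φ ⟨hφ, L, hL⟩
    refine ⟨hφ.const_smul c, |c| * L, fun x => ?_⟩
    rw [Pi.smul_apply, smul_eq_mul, abs_mul, mul_assoc]
    exact mul_le_mul_of_nonneg_left (hL x) (abs_nonneg c)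

variable {r : ℝ} {x₀ : X}

lemma mem_growthSubmodule_of_bounded {φ : X → ℝ} (hφ : Continuous φ) {M : ℝ}
    (hM : ∀ x, |φ x| ≤ M) : φ ∈ growthSubmodule r x₀ :=
  ⟨hφ, M, fun x => (hM x).trans (le_mul_of_one_le_right ((abs_nonneg _).trans (hM x))
    (le_add_of_nonneg_right (Real.rpow_nonneg dist_nonneg r)))⟩

lemma continuous_dist_rpow (hr : 0 ≤ r) (x₀ : X) : Continuous fun x => dist x x₀ ^ r :=
  (continuous_id.dist continuous_const).rpow_const fun _ => Or.inr hr

lemma dist_rpow_mem_growthSubmodule (hr : 0 ≤ r) :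
    (fun x => dist x x₀ ^ r) ∈ growthSubmodule r x₀ :=
  ⟨continuous_dist_rpow hr x₀, 1, fun x => by
    rw [abs_of_nonneg (Real.rpow_nonneg dist_nonneg r)]
    linarith⟩

lemma sub_const_mul_dist_rpow_mem_PhiR (hr : 0 ≤ r) (K : ℝ) {φ : X → ℝ} (hφ : φ ∈ PhiR r x₀) :
    (fun x => φ x - K * dist x x₀ ^ r) ∈ PhiR r x₀ :=
  sub_mem (H := growthSubmodule r x₀) hφ
    (Submodule.smul_mem _ K (dist_rpow_mem_growthSubmodule hr))

variable [MeasurableSpace X]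

/-- The `r`-th moment `∫ d(x, x₀)^r p(dx)`. -/
def rMoment (r : ℝ) (x₀ : X) (p : Measure X) : ℝ≥0∞ :=
  ∫⁻ x, ENNReal.ofReal (dist x x₀ ^ r) ∂p

variable [OpensMeasurableSpace X]

lemma measurable_ofReal_dist_rpow (r : ℝ) (x₀ : X) :
    Measurable fun x => ENNReal.ofReal (dist x x₀ ^ r) := by
  fun_prop

lemma measurable_rMoment (r : ℝ) (x₀ : X) : Measurable (rMoment r x₀) :=
  Measure.measurable_lintegral (measurable_ofReal_dist_rpow r x₀)

lemma measurableSet_Pr (r : ℝ) (x₀ : X) : MeasurableSet (Pr r x₀) :=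
  ProbabilityMeasure.measurableSet_isProbabilityMeasure.inter
    (measurable_rMoment r x₀ measurableSet_Iio)

lemma dirac_mem_Pr (r : ℝ) (x₀ x : X) : Measure.dirac x ∈ Pr r x₀ :=
  ⟨inferInstance, by
    rw [FinMom, lintegral_dirac' _ (measurable_ofReal_dist_rpow r x₀)]
    exact ENNReal.ofReal_lt_top⟩

lemma integral_dist_rpow (r : ℝ) (x₀ : X) (p : Measure X) :
    ∫ x, dist x x₀ ^ r ∂p = (rMoment r x₀ p).toReal :=
  integral_eq_lintegral_of_nonneg_ae (ae_of_all _ fun _ => Real.rpow_nonneg dist_nonneg r)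
    (by fun_prop : Measurable fun x => dist x x₀ ^ r).aestronglyMeasurable

lemma integrable_dist_rpow {p : Measure X} (hp : FinMom r x₀ p) :
    Integrable (fun x => dist x x₀ ^ r) p :=
  ⟨(by fun_prop : Measurable fun x => dist x x₀ ^ r).aestronglyMeasurable,
    (hasFiniteIntegral_iff_ofReal (ae_of_all _ fun _ => Real.rpow_nonneg dist_nonneg r)).2 hp⟩

lemma integrable_of_mem_PhiR {p : Measure X} (hp : p ∈ Pr r x₀) {φ : X → ℝ}
    (hφ : φ ∈ PhiR r x₀) : Integrable φ p := by
  have := hp.1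
  obtain ⟨hc, L, hL⟩ := hφ
  exact (((integrable_const 1).add (integrable_dist_rpow hp.2)).const_mul L).mono'
    hc.measurable.aestronglyMeasurable (ae_of_all _ hL)

/-- The linear functional `φ ↦ ∫ φ dp` on `Φ_r` for `p ∈ 𝒫_r`. -/
def growthIntegral {p : Measure X} (hp : p ∈ Pr r x₀) : growthSubmodule r x₀ →ₗ[ℝ] ℝ where
  toFun φ := ∫ x, φ.1 x ∂p
  map_add' φ ψ := integral_add (integrable_of_mem_PhiR hp φ.2) (integrable_of_mem_PhiR hp ψ.2)
  map_smul' c φ := integral_const_mul c φ.1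

end Growth

section Relaxed

variable {X Y : Type*} [MeasurableSpace X] [MeasurableSpace Y]

lemma integrable_integral_of_join {M : Measure (Measure Y)} {ψ : Y → ℝ} (hψ : Measurable ψ)
    (hi : Integrable ψ M.join) : Integrable (fun p => ∫ y, ψ y ∂p) M := by
  have hfin : ∫⁻ p, ∫⁻ y, ‖ψ y‖ₑ ∂p ∂M ≠ ⊤ := by
    rw [← Measure.lintegral_join hψ.enorm.aemeasurable]
    exact hi.2.ne
  refine ⟨(measurable_integral hψ).aestronglyMeasurable, ?_⟩
  exact (lintegral_mono fun p => enorm_integral_le_lintegral_enorm ψ).trans_lt hfin.lt_top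

lemma integral_join {M : Measure (Measure Y)} {ψ : Y → ℝ} (hψ : Measurable ψ)
    (hi : Integrable ψ M.join) : ∫ y, ψ y ∂M.join = ∫ p, ∫ y, ψ y ∂p ∂M := by
  have hjoin : ∀ {f : Y → ℝ}, Measurable f → Integrable f M.join →
      ∫⁻ p, ∫⁻ y, ENNReal.ofReal (f y) ∂p ∂M ≠ ⊤ := fun hf hfi => by
    rw [← Measure.lintegral_join hf.ennreal_ofReal.aemeasurable]
    exact hfi.lintegral_lt_top.ne
  have hψneg : Measurable fun y => -ψ y := hψ.neg
  have hpos := Measure.measurable_lintegral hψ.ennreal_ofReal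
  have hneg := Measure.measurable_lintegral hψneg.ennreal_ofReal
  have hae : ∀ᵐ p ∂M, ∫ y, ψ y ∂p = (∫⁻ y, ENNReal.ofReal (ψ y) ∂p).toReal
      - (∫⁻ y, ENNReal.ofReal (-ψ y) ∂p).toReal := by
    have hfin : ∀ᵐ p ∂M, ∫⁻ y, ‖ψ y‖ₑ ∂p < ⊤ := by
      refine ae_lt_top (Measure.measurable_lintegral hψ.enorm) ?_
      rw [← Measure.lintegral_join hψ.enorm.aemeasurable]
      exact hi.2.ne
    filter_upwards [hfin] with p hp
    exact integral_eq_lintegral_pos_part_sub_lintegral_neg_part ⟨hψ.aestronglyMeasurable, hp⟩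
  rw [integral_congr_ae hae, integral_sub
    (integrable_toReal_of_lintegral_ne_top hpos.aemeasurable (hjoin hψ hi))
    (integrable_toReal_of_lintegral_ne_top hneg.aemeasurable (hjoin hψneg hi.neg)),
    integral_toReal hpos.aemeasurable (ae_lt_top hpos (hjoin hψ hi)),
    integral_toReal hneg.aemeasurable (ae_lt_top hneg (hjoin hψneg hi.neg)),
    integral_eq_lintegral_pos_part_sub_lintegral_neg_part hi,
    Measure.lintegral_join hψ.ennreal_ofReal.aemeasurable,
    Measure.lintegral_join hψneg.ennreal_ofReal.aemeasurable]

lemma aemeasurable_dirac_prod {P : Measure (X × Measure Y)}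
    (hP : ∀ᵐ xp ∂P, IsProbabilityMeasure xp.2) :
    AEMeasurable (fun xp => (Measure.dirac xp.1).prod xp.2) P := by
  classical
  have hset : MeasurableSet {xp : X × Measure Y | IsProbabilityMeasure xp.2} :=
    measurable_snd ProbabilityMeasure.measurableSet_isProbabilityMeasure
  let κ : ProbabilityTheory.Kernel (X × Measure Y) Y :=
    ⟨fun xp => if IsProbabilityMeasure xp.2 then xp.2 else 0,
      Measurable.ite hset measurable_snd measurable_const⟩
  have hκ : ∀ xp, IsProbabilityMeasure xp.2 → κ xp = xp.2 := fun _ h => if_pos h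
  have : ProbabilityTheory.IsFiniteKernel κ := ⟨1, ENNReal.one_lt_top, fun xp => by
    change (if IsProbabilityMeasure xp.2 then xp.2 else 0 : Measure Y) univ ≤ 1
    split_ifs with h
    exacts [prob_le_one, zero_le]⟩
  refine ⟨ProbabilityTheory.Kernel.prod (.deterministic Prod.fst measurable_fst) κ,
    ProbabilityTheory.Kernel.measurable _, ?_⟩
  filter_upwards [hP] with xp hxp
  rw [ProbabilityTheory.Kernel.prod_apply, ProbabilityTheory.Kernel.deterministic_apply, hκ xp hxp]

lemma intensityHat_apply_prod {P : Measure (X × Measure Y)}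
    (hP : ∀ᵐ xp ∂P, IsProbabilityMeasure xp.2) {s : Set X} (hs : MeasurableSet s) {t : Set Y}
    (ht : MeasurableSet t) :
    intensityHat P (s ×ˢ t) = ∫⁻ xp in Prod.fst ⁻¹' s, xp.2 t ∂P := by
  rw [intensityHat, Measure.bind_apply (hs.prod ht) (aemeasurable_dirac_prod hP),
    ← lintegral_indicator (measurable_fst hs)]
  refine lintegral_congr_ae ?_
  filter_upwards [hP] with xp hxp
  by_cases hx : xp.1 ∈ s <;> simp [Measure.prod_prod, hx, hs]

lemma map_fst_intensityHat {P : Measure (X × Measure Y)}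
    (hP : ∀ᵐ xp ∂P, IsProbabilityMeasure xp.2) :
    (intensityHat P).map Prod.fst = P.map Prod.fst := by
  ext s hs
  rw [Measure.map_apply measurable_fst hs, Measure.map_apply measurable_fst hs, ← prod_univ,
    intensityHat_apply_prod hP hs .univ, setLIntegral_congr_fun_ae (measurable_fst hs)
      (hP.mono fun xp hxp _ => measure_univ), setLIntegral_one]

lemma map_snd_intensityHat {P : Measure (X × Measure Y)}
    (hP : ∀ᵐ xp ∂P, IsProbabilityMeasure xp.2) :
    (intensityHat P).map Prod.snd = (P.map Prod.snd).join := by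
  ext t ht
  rw [Measure.map_apply measurable_snd ht, ← univ_prod, intensityHat_apply_prod hP .univ ht,
    preimage_univ, Measure.restrict_univ, Measure.join_apply ht,
    lintegral_map (Measure.measurable_coe ht) measurable_snd]

lemma mem_Lambda_iff {μ : Measure X} {ν : Measure Y} {P : Measure (X × Measure Y)} :
    P ∈ Lambda μ ν ↔ IsProbabilityMeasure P ∧ (∀ᵐ xp ∂P, IsProbabilityMeasure xp.2) ∧
      P.map Prod.fst = μ ∧ (P.map Prod.snd).join = ν :=
  and_congr_right fun _ => and_congr_right fun h => by
    rw [Couplings, mem_ofPred, map_fst_intensityHat h, map_snd_intensityHat h]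

lemma lintegral_lintegral_of_mem_Lambda {μ : Measure X} {ν : Measure Y}
    {P : Measure (X × Measure Y)} (hP : P ∈ Lambda μ ν) {f : Y → ℝ≥0∞} (hf : Measurable f) :
    ∫⁻ xp, ∫⁻ y, f y ∂xp.2 ∂P = ∫⁻ y, f y ∂ν := by
  rw [← (mem_Lambda_iff.1 hP).2.2.2, Measure.lintegral_join hf.aemeasurable,
    lintegral_map (Measure.measurable_lintegral hf) measurable_snd]

lemma integrable_integral_snd_of_mem_Lambda {μ : Measure X} {ν : Measure Y}
    {P : Measure (X × Measure Y)} (hP : P ∈ Lambda μ ν) {ψ : Y → ℝ} (hψ : Measurable ψ)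
    (hi : Integrable ψ ν) : Integrable (fun xp => ∫ y, ψ y ∂xp.2) P := by
  rw [← (mem_Lambda_iff.1 hP).2.2.2] at hi
  exact (integrable_integral_of_join hψ hi).comp_measurable measurable_snd

lemma integral_integral_of_mem_Lambda {μ : Measure X} {ν : Measure Y}
    {P : Measure (X × Measure Y)} (hP : P ∈ Lambda μ ν) {ψ : Y → ℝ} (hψ : Measurable ψ)
    (hi : Integrable ψ ν) : ∫ xp, ∫ y, ψ y ∂xp.2 ∂P = ∫ y, ψ y ∂ν := by
  rw [← (mem_Lambda_iff.1 hP).2.2.2] at hi ⊢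
  rw [integral_join hψ hi, integral_map measurable_snd.aemeasurable
    (measurable_integral hψ).aestronglyMeasurable]

lemma ae_mem_Pr_of_mem_Lambda [PseudoMetricSpace Y] [OpensMeasurableSpace Y] {μ : Measure X}
    {ν : Measure Y} {P : Measure (X × Measure Y)} (hP : P ∈ Lambda μ ν) {r : ℝ} {y₀ : Y}
    (hν : FinMom r y₀ ν) : ∀ᵐ xp ∂P, xp.2 ∈ Pr r y₀ := by
  have hmoment : ∀ᵐ xp ∂P, rMoment r y₀ xp.2 < ⊤ :=
    ae_lt_top ((measurable_rMoment r y₀).comp measurable_snd)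
      ((lintegral_lintegral_of_mem_Lambda hP (measurable_ofReal_dist_rpow r y₀)).trans_lt hν).ne
  exact hP.2.1.and hmoment

lemma integrable_dist_fst_of_mem_Lambda [PseudoMetricSpace X] [OpensMeasurableSpace X]
    {μ : Measure X} {ν : Measure Y} {P : Measure (X × Measure Y)} (hP : P ∈ Lambda μ ν) {r : ℝ}
    {x₀ : X} (hμ : FinMom r x₀ μ) : Integrable (fun xp => dist xp.1 x₀ ^ r) P := by
  rw [FinMom, ← (mem_Lambda_iff.1 hP).2.2.1] at hμ
  exact (integrable_dist_rpow hμ).comp_measurable measurable_fst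

lemma integrable_rMoment_snd_of_mem_Lambda [PseudoMetricSpace Y] [OpensMeasurableSpace Y]
    {μ : Measure X} {ν : Measure Y} {P : Measure (X × Measure Y)} (hP : P ∈ Lambda μ ν) {r : ℝ}
    {y₀ : Y} (hν : FinMom r y₀ ν) : Integrable (fun xp => (rMoment r y₀ xp.2).toReal) P := by
  simp only [← integral_dist_rpow]
  exact integrable_integral_snd_of_mem_Lambda hP (by fun_prop) (integrable_dist_rpow hν)

end Relaxed

section Couplings

variable {X Y : Type*} [MeasurableSpace X] [MeasurableSpace Y]

lemma exists_mem_Couplings {u : Measure X} {v : Measure Y} [IsFiniteMeasure u] [IsFiniteMeasure v]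
    (huv : u univ = v univ) : ∃ κ, κ ∈ Couplings u v := by
  obtain hu | hu := eq_or_ne (u univ) 0
  · obtain rfl := Measure.measure_univ_eq_zero.1 hu
    obtain rfl := Measure.measure_univ_eq_zero.1 (huv.symm.trans hu)
    exact ⟨0, Measure.map_zero _, Measure.map_zero _⟩
  refine ⟨(u univ)⁻¹ • u.prod v, ?_, ?_⟩
  · rw [Measure.map_smul, Measure.map_fst_prod, ← huv, smul_smul,
      ENNReal.inv_mul_cancel hu (measure_ne_top u univ), one_smul]
  · rw [Measure.map_smul, Measure.map_snd_prod, smul_smul,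
      ENNReal.inv_mul_cancel hu (measure_ne_top u univ), one_smul]

lemma measure_univ_map_fst (κ : Measure (X × Y)) : κ.map Prod.fst univ = κ univ := by
  rw [Measure.map_apply measurable_fst .univ, preimage_univ]

lemma measure_univ_map_snd (κ : Measure (X × Y)) : κ.map Prod.snd univ = κ univ := by
  rw [Measure.map_apply measurable_snd .univ, preimage_univ]

lemma exists_le_measure_univ_eq (u : Measure X) [IsFiniteMeasure u] {a : ℝ≥0∞} (ha : a ≤ u univ) :
    ∃ u' ≤ u, u' univ = a := by
  obtain hu | hu := eq_or_ne (u univ) 0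
  · exact ⟨u, le_rfl, hu.trans (le_zero_iff.1 (ha.trans_eq hu)).symm⟩
  refine ⟨(a / u univ) • u, Measure.le_iff.2 fun s _ => ?_, ?_⟩
  · exact mul_le_of_le_one_left' (ENNReal.div_le_of_le_mul (by rwa [one_mul]))
  · exact ENNReal.div_mul_cancel hu (measure_ne_top u univ)

lemma exists_map_fst_le_map_snd_le (u : Measure X) (v : Measure Y) [IsFiniteMeasure u]
    [IsFiniteMeasure v] :
    ∃ γ : Measure (X × Y), γ.map Prod.fst ≤ u ∧ γ.map Prod.snd ≤ v ∧
      γ univ = min (u univ) (v univ) := by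
  obtain ⟨u', hu', hu'm⟩ := exists_le_measure_univ_eq u (min_le_left (u univ) (v univ))
  obtain ⟨v', hv', hv'm⟩ := exists_le_measure_univ_eq v (min_le_right (u univ) (v univ))
  have := isFiniteMeasure_of_le u hu'
  have := isFiniteMeasure_of_le v hv'
  obtain ⟨γ, rfl, rfl⟩ := exists_mem_Couplings (hu'm.trans hv'm.symm)
  exact ⟨γ, hu', hv', (measure_univ_map_fst γ).symm.trans hu'm⟩

lemma exists_add_mem_Couplings {p : Measure X} {q : Measure Y} [IsFiniteMeasure p]
    [IsFiniteMeasure q] (hpq : p univ = q univ) {γ : Measure (X × Y)} (hp : γ.map Prod.fst ≤ p)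
    (hq : γ.map Prod.snd ≤ q) : ∃ κ, γ + κ ∈ Couplings p q := by
  have := isFiniteMeasure_of_le p hp
  have := isFiniteMeasure_of_le q hq
  have hmass : (p - γ.map Prod.fst) univ = (q - γ.map Prod.snd) univ := by
    rw [Measure.sub_apply .univ hp, Measure.sub_apply .univ hq, measure_univ_map_fst,
      measure_univ_map_snd, hpq]
  obtain ⟨κ, hfst, hsnd⟩ := exists_mem_Couplings hmass
  refine ⟨κ, ?_, ?_⟩
  · rw [Measure.map_add _ _ measurable_fst, hfst, add_comm, Measure.sub_add_cancel_of_le hp]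
  · rw [Measure.map_add _ _ measurable_snd, hsnd, add_comm, Measure.sub_add_cancel_of_le hq]

lemma sum_restrict_le {ι : Type*} (p : Measure X) (s : Finset ι) {G : ι → Set X}
    (hG : ∀ i, MeasurableSet (G i)) (hdisj : Pairwise (Function.onFun Disjoint G)) :
    ∑ i ∈ s, p.restrict (G i) ≤ p := by
  rw [← Finset.sum_coe_sort, ← Measure.sum_fintype,
    ← Measure.restrict_biUnion_finset (fun _ _ _ _ hij => hdisj hij) hG]
  exact Measure.restrict_le_self

lemma exists_subcoupling_of_partition {ι : Type*} (p q : Measure X) [IsFiniteMeasure p]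
    [IsFiniteMeasure q] (s : Finset ι) {G : ι → Set X} (hG : ∀ i, MeasurableSet (G i))
    (hdisj : Pairwise (Function.onFun Disjoint G)) :
    ∃ γ : Measure (X × X), γ.map Prod.fst ≤ p ∧ γ.map Prod.snd ≤ q ∧
      γ univ = ∑ i ∈ s, min (p (G i)) (q (G i)) ∧ ∀ᵐ z ∂γ, ∃ i, z.1 ∈ G i ∧ z.2 ∈ G i := by
  choose γ hp hq hmass using fun i =>
    exists_map_fst_le_map_snd_le (p.restrict (G i)) (q.restrict (G i))
  simp only [Measure.restrict_apply_univ] at hmass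
  refine ⟨∑ i ∈ s, γ i, ?_, ?_, ?_, ?_⟩
  · rw [Measure.map_finset_sum measurable_fst.aemeasurable]
    exact (Finset.sum_le_sum fun i _ => hp i).trans (sum_restrict_le p s hG hdisj)
  · rw [Measure.map_finset_sum measurable_snd.aemeasurable]
    exact (Finset.sum_le_sum fun i _ => hq i).trans (sum_restrict_le q s hG hdisj)
  · simp only [Measure.coe_finsetSum, Finset.sum_apply, hmass]
  · refine ae_finsetSum_measure_iff.2 fun i _ => ?_
    have hfst : ∀ᵐ z ∂γ i, z.1 ∈ G i := ae_of_ae_map measurable_fst.aemeasurable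
      (Measure.absolutelyContinuous_of_le (hp i) (ae_restrict_mem (hG i)))
    have hsnd : ∀ᵐ z ∂γ i, z.2 ∈ G i := ae_of_ae_map measurable_snd.aemeasurable
      (Measure.absolutelyContinuous_of_le (hq i) (ae_restrict_mem (hG i)))
    filter_upwards [hfst, hsnd] with z h₁ h₂ using ⟨i, h₁, h₂⟩

end Couplings

section Wasserstein

variable {Y : Type*} [PseudoMetricSpace Y] {r : ℝ}

lemma ofReal_dist_rpow_le (hr : 0 ≤ r) (a b y₀ : Y) :
    ENNReal.ofReal (dist a b ^ r) ≤ ENNReal.ofReal (2 ^ r)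
      * (ENNReal.ofReal (dist a y₀ ^ r) + ENNReal.ofReal (dist b y₀ ^ r)) := by
  have ha := Real.rpow_nonneg (dist_nonneg (x := a) (y := y₀)) r
  have hb := Real.rpow_nonneg (dist_nonneg (x := b) (y := y₀)) r
  rw [← ENNReal.ofReal_add ha hb, ← ENNReal.ofReal_mul (by positivity)]
  refine ENNReal.ofReal_le_ofReal ?_
  calc dist a b ^ r ≤ (2 * max (dist a y₀) (dist b y₀)) ^ r := by
        refine Real.rpow_le_rpow dist_nonneg ((dist_triangle_right a b y₀).trans ?_) hr
        linarith [le_max_left (dist a y₀) (dist b y₀), le_max_right (dist a y₀) (dist b y₀)]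
    _ = 2 ^ r * max (dist a y₀) (dist b y₀) ^ r :=
        Real.mul_rpow zero_le_two (dist_nonneg.trans (le_max_left _ _))
    _ ≤ 2 ^ r * (dist a y₀ ^ r + dist b y₀ ^ r) := by
        gcongr
        obtain h | h := max_choice (dist a y₀) (dist b y₀) <;> rw [h] <;> linarith

variable [MeasurableSpace Y]

lemma rMoment_le_of_le {u p : Measure Y} (hup : u ≤ p) (r : ℝ) (y₀ : Y) (L : ℝ≥0∞) :
    rMoment r y₀ u ≤ L * u univ + ∫⁻ y, (ENNReal.ofReal (dist y y₀ ^ r) - L) ∂p :=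
  calc rMoment r y₀ u ≤ ∫⁻ y, (L + (ENNReal.ofReal (dist y y₀ ^ r) - L)) ∂u :=
        lintegral_mono fun y => le_add_tsub
    _ = L * u univ + ∫⁻ y, (ENNReal.ofReal (dist y y₀ ^ r) - L) ∂u := by
        rw [lintegral_add_left measurable_const, lintegral_const]
    _ ≤ _ := by gcongr

variable [OpensMeasurableSpace Y] [SecondCountableTopology Y]

lemma lintegral_dist_rpow_le_rMoment_add (hr : 0 ≤ r) (y₀ : Y) (κ : Measure (Y × Y)) :
    ∫⁻ z, ENNReal.ofReal (dist z.1 z.2 ^ r) ∂κ ≤ ENNReal.ofReal (2 ^ r)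
      * (rMoment r y₀ (κ.map Prod.fst) + rMoment r y₀ (κ.map Prod.snd)) := by
  have hf := measurable_ofReal_dist_rpow r y₀
  rw [rMoment, rMoment, lintegral_map hf measurable_fst, lintegral_map hf measurable_snd,
    ← lintegral_add_left (f := fun z : Y × Y => ENNReal.ofReal (dist z.1 y₀ ^ r)) (by fun_prop),
    ← lintegral_const_mul _ (by fun_prop)]
  exact lintegral_mono fun z => ofReal_dist_rpow_le hr z.1 z.2 y₀

/-- Couple `p` and `q` cell by cell as far as possible; what is left has small mass, and its cost is
controlled by the tails of `p` and `q` beyond level `L`. -/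
lemma exists_mem_Couplings_lintegral_dist_rpow_le (hr : 0 ≤ r) (y₀ : Y) (p q : Measure Y)
    [IsProbabilityMeasure p] [IsProbabilityMeasure q] {ι : Type*} (s : Finset ι) {G : ι → Set Y}
    (hG : ∀ i, MeasurableSet (G i)) (hdisj : Pairwise (Function.onFun Disjoint G)) {δ : ℝ}
    (hδ : ∀ i, ∀ a ∈ G i, ∀ b ∈ G i, dist a b ≤ δ) (L : ℝ≥0∞) :
    ∃ π ∈ Couplings p q, ∫⁻ z, ENNReal.ofReal (dist z.1 z.2 ^ r) ∂π ≤ ENNReal.ofReal (δ ^ r)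
      + ENNReal.ofReal (2 ^ r) * (2 * (L * (1 - ∑ i ∈ s, min (p (G i)) (q (G i))))
        + (∫⁻ y, (ENNReal.ofReal (dist y y₀ ^ r) - L) ∂p
          + ∫⁻ y, (ENNReal.ofReal (dist y y₀ ^ r) - L) ∂q)) := by
  obtain ⟨γ, hγp, hγq, hγ, hcell⟩ := exists_subcoupling_of_partition p q s hG hdisj
  obtain ⟨κ, hπ⟩ := exists_add_mem_Couplings (by simp only [measure_univ]) hγp hγq
  have hγκ : γ univ + κ univ = 1 := by
    rw [← Measure.add_apply, ← measure_univ_map_fst, hπ.1, measure_univ]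
  have hγ1 : γ univ ≤ 1 := hγκ ▸ le_self_add
  have hκ : κ univ = 1 - ∑ i ∈ s, min (p (G i)) (q (G i)) := by
    rw [← hγ, ← hγκ, ENNReal.add_sub_cancel_left (ne_top_of_le_ne_top ENNReal.one_ne_top hγ1)]
  have hκp : κ.map Prod.fst ≤ p := by
    rw [← hπ.1, Measure.map_add _ _ measurable_fst]
    exact Measure.le_add_left le_rfl
  have hκq : κ.map Prod.snd ≤ q := by
    rw [← hπ.2, Measure.map_add _ _ measurable_snd]
    exact Measure.le_add_left le_rfl
  have hp := rMoment_le_of_le hκp r y₀ L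
  have hq := rMoment_le_of_le hκq r y₀ L
  rw [measure_univ_map_fst, hκ] at hp
  rw [measure_univ_map_snd, hκ] at hq
  refine ⟨γ + κ, hπ, ?_⟩
  rw [lintegral_add_measure]
  refine add_le_add ?_ ((lintegral_dist_rpow_le_rMoment_add hr y₀ κ).trans ?_)
  · calc ∫⁻ z, ENNReal.ofReal (dist z.1 z.2 ^ r) ∂γ ≤ ∫⁻ _, ENNReal.ofReal (δ ^ r) ∂γ :=
          lintegral_mono_ae <| hcell.mono fun z ⟨i, h₁, h₂⟩ => ENNReal.ofReal_le_ofReal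
            (Real.rpow_le_rpow dist_nonneg (hδ i _ h₁ _ h₂) hr)
      _ ≤ ENNReal.ofReal (δ ^ r) := by
          rw [lintegral_const]
          exact mul_le_of_le_one_right' hγ1
  · refine mul_le_mul_right ((add_le_add hp hq).trans_eq ?_) _
    ring

/-- A coupling with a Dirac mass is carried by `{z | z.2 = y₀}`, so every coupling has the same
cost. -/
lemma Wr_dirac_rpow (hr : 0 < r) (y₀ : Y) (p : Measure Y) [IsProbabilityMeasure p] :
    Wr r p (Measure.dirac y₀) ^ r = rMoment r y₀ p := by
  have hcost : ∀ π ∈ Couplings p (Measure.dirac y₀),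
      ∫⁻ z, ENNReal.ofReal (dist z.1 z.2 ^ r) ∂π = rMoment r y₀ p := fun π hπ => by
    have hsnd : ∀ᵐ z ∂π, dist z.2 y₀ = 0 := by
      refine ae_of_ae_map (p := fun y => dist y y₀ = 0) measurable_snd.aemeasurable ?_
      rw [hπ.2, ae_dirac_iff (measurableSet_eq_fun (by fun_prop) measurable_const), dist_self]
    rw [rMoment, ← hπ.1, lintegral_map (measurable_ofReal_dist_rpow r y₀) measurable_fst]
    refine lintegral_congr_ae (hsnd.mono fun z hz => ?_)
    have hdist : dist z.1 z.2 = dist z.1 y₀ := le_antisymm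
      (by linarith [dist_triangle_right z.1 z.2 y₀]) (by linarith [dist_triangle z.1 z.2 y₀])
    simp only [hdist]
  have hprod : p.prod (Measure.dirac y₀) ∈ Couplings p (Measure.dirac y₀) :=
    ⟨by rw [Measure.map_fst_prod, measure_univ, one_smul],
      by rw [Measure.map_snd_prod, measure_univ, one_smul]⟩
  have hWr : Wr r p (Measure.dirac y₀) = rMoment r y₀ p ^ (1 / r) :=
    le_antisymm ((iInf₂_le _ hprod).trans_eq (by rw [hcost _ hprod]))
      (le_iInf₂ fun π hπ => by rw [hcost π hπ])
  rw [hWr, ← ENNReal.rpow_mul, one_div_mul_cancel hr.ne', ENNReal.rpow_one]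

end Wasserstein

section OpenPartition

variable {Y : Type*}

lemma ae_exists_mem_sdiff_biUnion_closure [TopologicalSpace Y] [MeasurableSpace Y] {p : Measure Y}
    {B : ℕ → Set Y} (hB : ∀ k, IsOpen (B k)) (hcover : ⋃ k, B k = univ)
    (hnull : ∀ k, p (frontier (B k)) = 0) :
    ∀ᵐ y ∂p, ∃ k, y ∈ B k \ ⋃ l ∈ Finset.range k, closure (B l) := by
  classical
  filter_upwards [ae_all_iff.2 fun k => measure_eq_zero_iff_ae_notMem.1 (hnull k)] with y hy
  have hex : ∃ k, y ∈ B k := mem_iUnion.1 (hcover ▸ mem_univ y)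
  refine ⟨Nat.find hex, Nat.find_spec hex, fun hcl => ?_⟩
  obtain ⟨l, hl, hyl⟩ := mem_iUnion₂.1 hcl
  refine hy l ⟨hyl, fun hint => Nat.find_min hex (Finset.mem_range.1 hl) ?_⟩
  rwa [(hB l).interior_eq] at hint

variable [PseudoMetricSpace Y] [SecondCountableTopology Y] [MeasurableSpace Y]
  [OpensMeasurableSpace Y]

lemma exists_ball_cover_null_frontier [Nonempty Y] (p : Measure Y) [IsFiniteMeasure p] {δ : ℝ}
    (hδ : 0 < δ) : ∃ B : ℕ → Set Y, (∀ k, IsOpen (B k)) ∧ ⋃ k, B k = univ ∧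
      (∀ k, p (frontier (B k)) = 0) ∧ ∀ k, ∀ a ∈ B k, ∀ b ∈ B k, dist a b ≤ δ := by
  have hρ (k : ℕ) : ∃ ρ ∈ Ioo (δ / 4) (δ / 2),
      p (frontier (Metric.ball (TopologicalSpace.denseSeq Y k) ρ)) = 0 := by
    simpa only [Metric.thickening_singleton] using exists_null_frontier_thickening p
      {TopologicalSpace.denseSeq Y k} (show δ / 4 < δ / 2 by linarith)
  choose ρ hρδ hnull using hρ
  refine ⟨fun k => Metric.ball (TopologicalSpace.denseSeq Y k) (ρ k),
    fun k => Metric.isOpen_ball, eq_univ_of_forall fun y => ?_, hnull, fun k a ha b hb => ?_⟩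
  · obtain ⟨k, hk⟩ := (TopologicalSpace.denseRange_denseSeq Y).exists_dist_lt y
      (show 0 < δ / 4 by linarith)
    exact mem_iUnion.2 ⟨k, hk.trans (hρδ k).1⟩
  · have ha : dist a _ < ρ k := ha
    have hb : dist b _ < ρ k := hb
    linarith [dist_triangle_right a b (TopologicalSpace.denseSeq Y k), (hρδ k).2]

lemma exists_open_partition [Nonempty Y] (p : Measure Y) [IsFiniteMeasure p] {δ : ℝ}
    (hδ : 0 < δ) : ∃ G : ℕ → Set Y, (∀ k, IsOpen (G k)) ∧ Pairwise (Function.onFun Disjoint G) ∧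
      (∀ k, ∀ a ∈ G k, ∀ b ∈ G k, dist a b ≤ δ) ∧
      Tendsto (fun N => ∑ k ∈ Finset.range N, p (G k)) atTop (𝓝 (p univ)) := by
  obtain ⟨B, hB, hcover, hnull, hdiam⟩ := exists_ball_cover_null_frontier p hδ
  let G : ℕ → Set Y := fun k => B k \ ⋃ l ∈ Finset.range k, closure (B l)
  have hG (k : ℕ) : IsOpen (G k) :=
    (hB k).sdiff (Set.Finite.isClosed_biUnion (Finset.finite_toSet _) fun _ _ => isClosed_closure)
  have hdisj : Pairwise (Function.onFun Disjoint G) := by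
    refine (pairwise_disjoint_on G).2 fun i j hij => disjoint_left.2 fun y hi hj => hj.2 ?_
    exact mem_iUnion₂.2 ⟨i, Finset.mem_range.2 hij, subset_closure hi.1⟩
  refine ⟨G, hG, hdisj, fun k a ha b hb => hdiam k a ha.1 b hb.1, ?_⟩
  have hfull : p univ = p (⋃ k, G k) := by
    refine measure_congr (eventuallyEq_set.2 ?_)
    filter_upwards [ae_exists_mem_sdiff_biUnion_closure hB hcover hnull] with y hy
    exact iff_of_true (mem_univ y) (mem_iUnion.2 hy)
  rw [hfull, measure_iUnion hdisj fun k => (hG k).measurableSet]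
  exact ENNReal.summable.hasSum.tendsto_sum_nat

end OpenPartition

section WassersteinConvergence

variable {Y : Type*}

lemma tendsto_lintegral_sub_natCast_zero [MeasurableSpace Y] {p : Measure Y} {f : Y → ℝ≥0∞}
    (hf : Measurable f) (hfin : ∫⁻ y, f y ∂p ≠ ⊤) :
    Tendsto (fun L : ℕ => ∫⁻ y, (f y - L) ∂p) atTop (𝓝 0) := by
  rw [← lintegral_zero (μ := p)]
  refine tendsto_lintegral_filter_of_dominated_convergence f
    (Eventually.of_forall fun L => hf.sub measurable_const)
    (Eventually.of_forall fun L => Eventually.of_forall fun y => tsub_le_self) hfin ?_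
  filter_upwards [ae_lt_top hf hfin] with y hy
  obtain ⟨N, hN⟩ := ENNReal.exists_nat_gt hy.ne
  refine tendsto_const_nhds.congr' ?_
  filter_upwards [eventually_ge_atTop N] with L hL
  exact (tsub_eq_zero_of_le (hN.le.trans (Nat.cast_le.2 hL))).symm

variable [MeasurableSpace Y]

lemma tendsto_sum_min_measure_open [TopologicalSpace Y] [OpensMeasurableSpace Y]
    [HasOuterApproxClosed Y] {ps : ℕ → ProbabilityMeasure Y} {p : ProbabilityMeasure Y}
    (hw : Tendsto ps atTop (𝓝 p)) (s : Finset ℕ) {G : ℕ → Set Y} (hG : ∀ k, IsOpen (G k)) :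
    Tendsto (fun n => ∑ k ∈ s, min ((ps n : Measure Y) (G k)) ((p : Measure Y) (G k))) atTop
      (𝓝 (∑ k ∈ s, (p : Measure Y) (G k))) := by
  refine tendsto_finsetSum _ fun k _ => tendsto_of_le_liminf_of_limsup_le ?_ ?_
  · rw [liminf_min, liminf_const, le_min_iff]
    exact ⟨ProbabilityMeasure.le_liminf_measure_open_of_tendsto hw (hG k), le_rfl⟩
  · exact limsup_le_of_le (h := Eventually.of_forall fun n => min_le_right _ _)

lemma lintegral_sub_natCast_eq {p : Measure Y} {f : Y → ℝ≥0∞} (hf : Measurable f)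
    (hfin : ∫⁻ y, f y ∂p ≠ ⊤) (L : ℝ≥0∞) :
    ∫⁻ y, (f y - L) ∂p = ∫⁻ y, f y ∂p - ∫⁻ y, min (f y) L ∂p := by
  have hle : (fun y => min (f y) L) ≤ f := fun y => min_le_left _ _
  rw [← lintegral_sub (hf.min measurable_const)
    (ne_top_of_le_ne_top hfin (lintegral_mono hle)) (Eventually.of_forall hle)]
  refine lintegral_congr fun y => ?_
  obtain h | h := le_total (f y) L
  · rw [min_eq_left h, tsub_self, tsub_eq_zero_of_le h]
  · rw [min_eq_right h]

lemma tendsto_lintegral_sub_of_tendsto [TopologicalSpace Y] [OpensMeasurableSpace Y]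
    {ps : ℕ → ProbabilityMeasure Y} {p : ProbabilityMeasure Y} (hw : Tendsto ps atTop (𝓝 p))
    {f : Y → ℝ≥0} (hf : Continuous f) (hfin : ∫⁻ y, f y ∂(p : Measure Y) ≠ ⊤)
    (hfins : ∀ n, ∫⁻ y, f y ∂(ps n : Measure Y) ≠ ⊤)
    (hm : Tendsto (fun n => ∫⁻ y, f y ∂(ps n : Measure Y)) atTop
      (𝓝 (∫⁻ y, f y ∂(p : Measure Y)))) (L : ℝ≥0) :
    Tendsto (fun n => ∫⁻ y, ((f y : ℝ≥0∞) - L) ∂(ps n : Measure Y)) atTop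
      (𝓝 (∫⁻ y, ((f y : ℝ≥0∞) - L) ∂(p : Measure Y))) := by
  have hfm : Measurable fun y => (f y : ℝ≥0∞) := hf.measurable.coe_nnreal_ennreal
  let b : BoundedContinuousFunction Y ℝ≥0 := BoundedContinuousFunction.mkOfBound
    ⟨fun y => min (f y) L, hf.min continuous_const⟩ L fun y z =>
      (Real.dist_le_of_mem_Icc ⟨(min (f y) L).coe_nonneg, NNReal.coe_le_coe.2 (min_le_right _ _)⟩
        ⟨(min (f z) L).coe_nonneg, NNReal.coe_le_coe.2 (min_le_right _ _)⟩).trans_eq (sub_zero _)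
  have hb := ProbabilityMeasure.tendsto_iff_forall_lintegral_tendsto.1 hw b
  simp only [lintegral_sub_natCast_eq hfm hfin, fun n => lintegral_sub_natCast_eq hfm (hfins n)]
  exact ENNReal.Tendsto.sub hm hb (Or.inl hfin)

variable [PseudoMetricSpace Y] {r : ℝ}

lemma Wr_rpow_le (hr : 0 < r) {p q : Measure Y} {π : Measure (Y × Y)} (hπ : π ∈ Couplings p q) :
    Wr r p q ^ r ≤ ∫⁻ z, ENNReal.ofReal (dist z.1 z.2 ^ r) ∂π :=
  calc Wr r p q ^ r ≤ ((∫⁻ z, ENNReal.ofReal (dist z.1 z.2 ^ r) ∂π) ^ (1 / r)) ^ r :=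
        ENNReal.rpow_le_rpow (iInf₂_le π hπ) hr.le
    _ = ∫⁻ z, ENNReal.ofReal (dist z.1 z.2 ^ r) ∂π := by
        rw [← ENNReal.rpow_mul, one_div_mul_cancel hr.ne', ENNReal.rpow_one]

variable [SecondCountableTopology Y] [OpensMeasurableSpace Y] {y₀ : Y}
  {ps : ℕ → ProbabilityMeasure Y} {p : ProbabilityMeasure Y}

lemma limsup_Wr_rpow_le_of_partition (hr : 0 < r) (hw : Tendsto ps atTop (𝓝 p))
    (hfin : rMoment r y₀ (p : Measure Y) ≠ ⊤) (hfins : ∀ n, rMoment r y₀ (ps n : Measure Y) ≠ ⊤)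
    (hm : Tendsto (fun n => rMoment r y₀ (ps n : Measure Y)) atTop
      (𝓝 (rMoment r y₀ (p : Measure Y)))) (s : Finset ℕ) {G : ℕ → Set Y}
    (hG : ∀ k, IsOpen (G k)) (hdisj : Pairwise (Function.onFun Disjoint G)) {δ : ℝ}
    (hδ : ∀ k, ∀ a ∈ G k, ∀ b ∈ G k, dist a b ≤ δ) (L : ℝ≥0) :
    limsup (fun n => Wr r (ps n : Measure Y) (p : Measure Y) ^ r) atTop ≤ ENNReal.ofReal (δ ^ r)
      + ENNReal.ofReal (2 ^ r) * (2 * (L * (1 - ∑ k ∈ s, (p : Measure Y) (G k)))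
        + (∫⁻ y, (ENNReal.ofReal (dist y y₀ ^ r) - L) ∂(p : Measure Y)
          + ∫⁻ y, (ENNReal.ofReal (dist y y₀ ^ r) - L) ∂(p : Measure Y))) := by
  have hmass := ENNReal.Tendsto.sub (tendsto_const_nhds (x := (1 : ℝ≥0∞)))
    (tendsto_sum_min_measure_open hw s hG) (Or.inl ENNReal.one_ne_top)
  have htail := tendsto_lintegral_sub_of_tendsto hw
    (continuous_real_toNNReal.comp (continuous_dist_rpow hr.le y₀)) hfin hfins hm L
  refine (limsup_le_limsup (Eventually.of_forall fun n => ?_)).trans_eq <| Tendsto.limsup_eq <|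
    tendsto_const_nhds.add <| ENNReal.Tendsto.const_mul ((ENNReal.Tendsto.const_mul
      (ENNReal.Tendsto.const_mul hmass (Or.inr ENNReal.coe_ne_top))
      (Or.inr ENNReal.ofNat_ne_top)).add (htail.add tendsto_const_nhds))
      (Or.inr ENNReal.ofReal_ne_top)
  obtain ⟨π, hπ, hcost⟩ := exists_mem_Couplings_lintegral_dist_rpow_le hr.le y₀
    (ps n : Measure Y) (p : Measure Y) s (fun k => (hG k).measurableSet) hdisj hδ L
  exact (Wr_rpow_le hr hπ).trans hcost

lemma limsup_Wr_rpow_le (hr : 0 < r) (hw : Tendsto ps atTop (𝓝 p))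
    (hfin : rMoment r y₀ (p : Measure Y) ≠ ⊤) (hfins : ∀ n, rMoment r y₀ (ps n : Measure Y) ≠ ⊤)
    (hm : Tendsto (fun n => rMoment r y₀ (ps n : Measure Y)) atTop
      (𝓝 (rMoment r y₀ (p : Measure Y)))) {δ : ℝ} (hδ : 0 < δ) :
    limsup (fun n => Wr r (ps n : Measure Y) (p : Measure Y) ^ r) atTop
      ≤ ENNReal.ofReal (δ ^ r) := by
  have : Nonempty Y := ⟨y₀⟩
  obtain ⟨G, hG, hdisj, hdiam, hsum⟩ := exists_open_partition (p : Measure Y) hδ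
  rw [measure_univ] at hsum
  have hmass := ENNReal.Tendsto.sub (tendsto_const_nhds (x := (1 : ℝ≥0∞))) hsum
    (Or.inl ENNReal.one_ne_top)
  rw [tsub_self] at hmass
  have htail := tendsto_lintegral_sub_natCast_zero (measurable_ofReal_dist_rpow r y₀) hfin
  have hL (L : ℕ) : limsup (fun n => Wr r (ps n : Measure Y) (p : Measure Y) ^ r) atTop ≤
      ENNReal.ofReal (δ ^ r) + ENNReal.ofReal (2 ^ r)
        * (2 * ((L : ℝ≥0∞) * 0) + (∫⁻ y, (ENNReal.ofReal (dist y y₀ ^ r) - L) ∂(p : Measure Y)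
          + ∫⁻ y, (ENNReal.ofReal (dist y y₀ ^ r) - L) ∂(p : Measure Y))) :=
    ge_of_tendsto' (tendsto_const_nhds.add <| ENNReal.Tendsto.const_mul ((ENNReal.Tendsto.const_mul
      (ENNReal.Tendsto.const_mul hmass (Or.inr (ENNReal.natCast_ne_top L)))
      (Or.inr ENNReal.ofNat_ne_top)).add tendsto_const_nhds) (Or.inr ENNReal.ofReal_ne_top))
      fun N => limsup_Wr_rpow_le_of_partition hr hw hfin hfins hm (Finset.range N) hG hdisj hdiam L
  simp only [mul_zero, zero_add] at hL
  simpa only [add_zero, mul_zero] using ge_of_tendsto' (tendsto_const_nhds.add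
    (ENNReal.Tendsto.const_mul (htail.add htail) (Or.inr ENNReal.ofReal_ne_top))) hL

theorem wrTendsto_of_tendsto (hr : 0 < r) (hw : Tendsto ps atTop (𝓝 p))
    (hfin : rMoment r y₀ (p : Measure Y) ≠ ⊤) (hfins : ∀ n, rMoment r y₀ (ps n : Measure Y) ≠ ⊤)
    (hm : Tendsto (fun n => rMoment r y₀ (ps n : Measure Y)) atTop
      (𝓝 (rMoment r y₀ (p : Measure Y)))) :
    WrTendsto r (fun n => (ps n : Measure Y)) (p : Measure Y) := by
  have hδ0 : Tendsto (fun δ : ℝ => ENNReal.ofReal (δ ^ r)) (𝓝[>] 0) (𝓝 0) := by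
    have hcont : Continuous fun δ : ℝ => ENNReal.ofReal (δ ^ r) :=
      ENNReal.continuous_ofReal.comp (Real.continuous_rpow_const hr.le)
    simpa only [Real.zero_rpow hr.ne', ENNReal.ofReal_zero] using
      (hcont.tendsto 0).mono_left nhdsWithin_le_nhds
  have hlimsup : limsup (fun n => Wr r (ps n : Measure Y) (p : Measure Y) ^ r) atTop ≤ 0 :=
    ge_of_tendsto hδ0 <| eventually_nhdsWithin_of_forall fun δ hδ =>
      limsup_Wr_rpow_le hr hw hfin hfins hm hδ
  have hWr := (tendsto_of_le_liminf_of_limsup_le zero_le hlimsup).ennrpow_const r⁻¹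
  simpa only [← ENNReal.rpow_mul, mul_inv_cancel₀ hr.ne', ENNReal.rpow_one,
    ENNReal.zero_rpow_of_pos (inv_pos.2 hr), WrTendsto] using hWr

end WassersteinConvergence

section Compactification

lemma measure_eq_of_forall_lintegral_le {K : Type*} [TopologicalSpace K] [MeasurableSpace K]
    [HasOuterApproxClosed K] [BorelSpace K] {P Q : Measure K} [IsProbabilityMeasure P]
    [IsProbabilityMeasure Q]
    (h : ∀ f : BoundedContinuousFunction K ℝ≥0, ∫⁻ k, f k ∂P ≤ ∫⁻ k, f k ∂Q) : P = Q := by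
  refine ext_of_forall_lintegral_eq_of_IsFiniteMeasure fun f => (h f).antisymm ?_
  let f' : BoundedContinuousFunction K ℝ≥0 := .const K (nndist f 0) - f
  have hadd : ∀ N : Measure K, IsProbabilityMeasure N →
      ∫⁻ k, f k ∂N + ∫⁻ k, f' k ∂N = nndist f 0 := fun N _ => by
    have hconst : ∀ k, (f k : ℝ≥0∞) + f' k = nndist f 0 := fun k => by
      rw [← ENNReal.coe_add]
      exact congrArg _ (add_tsub_cancel_of_le (BoundedContinuousFunction.NNReal.upper_bound f k))
    rw [← lintegral_add_left (by fun_prop), lintegral_congr hconst, lintegral_const, measure_univ,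
      mul_one]
  have hfin : ∫⁻ k, f' k ∂P ≠ ⊤ := ne_top_of_le_ne_top ENNReal.coe_ne_top
    (le_add_self.trans (hadd P inferInstance).le)
  refine (ENNReal.add_le_add_iff_right hfin).1 ?_
  rw [hadd P inferInstance, ← hadd Q inferInstance]
  exact add_le_add_right (h f') _

variable {X Y KX KY : Type*} [MeasurableSpace Y]

/-- The inclusion of `X × 𝒫(Y)` into `X × {measures on Y}`. -/
def inclMeasure (X Y : Type*) [MeasurableSpace Y] (xp : X × ProbabilityMeasure Y) : X × Measure Y :=
  (xp.1, xp.2)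

lemma measurableEmbedding_inclMeasure [MeasurableSpace X] :
    MeasurableEmbedding (inclMeasure X Y) :=
  MeasurableEmbedding.id.prodMap (measurableEmbedding_toMeasure Y)

lemma map_inclMeasure_mem_Lambda [MeasurableSpace X] {μ : Measure X} {ν : Measure Y}
    {P : Measure (X × ProbabilityMeasure Y)} [IsProbabilityMeasure P] (hfst : P.map Prod.fst = μ)
    (hsnd : (P.map fun xp => (xp.2 : Measure Y)).join = ν) :
    P.map (inclMeasure X Y) ∈ Lambda μ ν := by
  have hmeas := (measurableEmbedding_inclMeasure (X := X) (Y := Y)).measurable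
  have hprob : ∀ᵐ xp ∂P.map (inclMeasure X Y), IsProbabilityMeasure xp.2 :=
    measurableEmbedding_inclMeasure.ae_map_iff.2 (ae_of_all _ fun xp => xp.2.2)
  rw [mem_Lambda_iff, Measure.map_map measurable_fst hmeas, Measure.map_map measurable_snd hmeas]
  exact ⟨Measure.isProbabilityMeasure_map hmeas.aemeasurable, hprob, hfst, hsnd⟩

variable [MeasurableSpace KX] [MeasurableSpace KY] {eX : X → KX} {eY : Y → KY} {ν : Measure Y}
  {Q : Measure (KX × ProbabilityMeasure KY × ℝ≥0∞)}

lemma measurable_toMeasure_snd_fst :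
    Measurable fun z : KX × ProbabilityMeasure KY × ℝ≥0∞ => (z.2.1 : Measure KY) :=
  measurable_subtype_coe.comp (measurable_fst.comp measurable_snd)

lemma ae_mem_range_map_of_join_eq (heY : MeasurableEmbedding eY)
    (hsnd : (Q.map fun z => (z.2.1 : Measure KY)).join = ν.map eY) :
    ∀ᵐ z ∂Q, ∃ p : ProbabilityMeasure Y, p.map heY.measurable.aemeasurable = z.2.1 := by
  have hrange := heY.measurableSet_range.compl
  have hnull : ∀ᵐ z ∂Q, (z.2.1 : Measure KY) (range eY)ᶜ = 0 := by
    refine (lintegral_eq_zero_iff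
      ((Measure.measurable_coe hrange).comp measurable_toMeasure_snd_fst)).1 ?_
    change ∫⁻ z, (z.2.1 : Measure KY) (range eY)ᶜ ∂Q = 0
    rw [← lintegral_map (Measure.measurable_coe hrange) measurable_toMeasure_snd_fst,
      ← Measure.join_apply hrange, hsnd, heY.map_apply]
    simp
  filter_upwards [hnull] with z hz
  have hmap : ((z.2.1 : Measure KY).comap eY).map eY = z.2.1 := by
    rw [heY.map_comap]
    exact Measure.restrict_eq_self_of_ae_mem (mem_ae_iff.2 hz)
  have hprob : IsProbabilityMeasure ((z.2.1 : Measure KY).comap eY) := ⟨by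
    rw [heY.comap_apply, image_univ, (prob_compl_eq_zero_iff heY.measurableSet_range).1 hz]⟩
  exact ⟨⟨_, hprob⟩, ProbabilityMeasure.toMeasure_injective hmap⟩

variable [PseudoMetricSpace Y] {r : ℝ} {y₀ : Y}

/-- The map `(x, p) ↦ (eX x, (eY)_# p, ∫ d(y, y₀)^r p(dy))` of `X × 𝒫(Y)` into a compact space.
The last coordinate detects `r`-th moments that escape to infinity. -/
def compactification (r : ℝ) (y₀ : Y) (eX : X → KX) (heY : Measurable eY)
    (xp : X × ProbabilityMeasure Y) : KX × ProbabilityMeasure KY × ℝ≥0∞ :=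
  (eX xp.1, xp.2.map heY.aemeasurable, rMoment r y₀ xp.2)

variable [MeasurableSpace X] {μ : Measure X}

lemma ae_mem_range_compactification (heX : MeasurableEmbedding eX) (heY : MeasurableEmbedding eY)
    (hfst : Q.map Prod.fst = μ.map eX)
    (hsnd : (Q.map fun z => (z.2.1 : Measure KY)).join = ν.map eY) (hν : FinMom r y₀ ν)
    {g : KY → ℝ≥0∞} (hg : Measurable g) (hge : ∀ y, g (eY y) = ENNReal.ofReal (dist y y₀ ^ r))
    (hgle : ∀ᵐ z ∂Q, ∫⁻ k, g k ∂(z.2.1 : Measure KY) ≤ z.2.2)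
    (hmoment : ∫⁻ z, z.2.2 ∂Q ≤ rMoment r y₀ ν) :
    ∀ᵐ z ∂Q, z ∈ range (compactification r y₀ eX heY.measurable) := by
  have hmap : ∀ p : Measure Y, ∫⁻ k, g k ∂p.map eY = rMoment r y₀ p := fun p => by
    rw [lintegral_map hg heY.measurable]
    exact lintegral_congr hge
  have htotal : ∫⁻ z, ∫⁻ k, g k ∂(z.2.1 : Measure KY) ∂Q = rMoment r y₀ ν := by
    rw [← hmap, ← hsnd, Measure.lintegral_join hg.aemeasurable,
      lintegral_map (Measure.measurable_lintegral hg) measurable_toMeasure_snd_fst]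
  have heq : ∀ᵐ z ∂Q, ∫⁻ k, g k ∂(z.2.1 : Measure KY) = z.2.2 :=
    ae_eq_of_ae_le_of_lintegral_le hgle (htotal.trans_lt hν).ne (by fun_prop)
      (hmoment.trans_eq htotal.symm)
  have hX : ∀ᵐ z ∂Q, z.1 ∈ range eX := by
    refine ae_of_ae_map (f := Prod.fst) measurable_fst.aemeasurable ?_
    rw [hfst]
    exact heX.ae_map_iff.2 (ae_of_all _ mem_range_self)
  filter_upwards [hX, ae_mem_range_map_of_join_eq heY hsnd, heq] with z ⟨x, hx⟩ ⟨p, hp⟩ hz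
  refine ⟨(x, p), Prod.ext hx (Prod.ext hp ?_)⟩
  change rMoment r y₀ (p : Measure Y) = z.2.2
  rw [← hz, ← hp, ← hmap]
  rfl

variable [OpensMeasurableSpace Y]

lemma measurable_compactification (heX : Measurable eX) (heY : MeasurableEmbedding eY) :
    Measurable (compactification r y₀ eX heY.measurable) :=
  (heX.comp measurable_fst).prodMk
    (((measurableEmbedding_probabilityMeasure_map heY).measurable.comp measurable_snd).prodMk
      ((measurable_rMoment r y₀).comp (measurable_subtype_coe.comp measurable_snd)))

lemma measurableEmbedding_compactification [StandardBorelSpace X] [StandardBorelSpace Y]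
    [StandardBorelSpace KX] [StandardBorelSpace KY] (heX : MeasurableEmbedding eX)
    (heY : MeasurableEmbedding eY) :
    MeasurableEmbedding (compactification r y₀ eX heY.measurable) := by
  refine (measurable_compactification heX.measurable heY).measurableEmbedding fun xp xp' h => ?_
  simp only [compactification, Prod.mk.injEq] at h
  exact Prod.ext (heX.injective h.1)
    ((measurableEmbedding_probabilityMeasure_map heY).injective h.2.1)

lemma map_inclMeasure_mem_Lambda_of_map_compactification {P : Measure (X × ProbabilityMeasure Y)}
    [IsProbabilityMeasure P] (heX : MeasurableEmbedding eX) (heY : MeasurableEmbedding eY)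
    (hfst : (P.map (compactification r y₀ eX heY.measurable)).map Prod.fst = μ.map eX)
    (hsnd : ((P.map (compactification r y₀ eX heY.measurable)).map
      fun z => (z.2.1 : Measure KY)).join = ν.map eY) :
    P.map (inclMeasure X Y) ∈ Lambda μ ν := by
  have hj := measurable_compactification (r := r) (y₀ := y₀) heX.measurable heY
  have hcoe : Measurable fun xp : X × ProbabilityMeasure Y => (xp.2 : Measure Y) :=
    measurable_subtype_coe.comp measurable_snd
  refine map_inclMeasure_mem_Lambda (heX.map_injective ?_) (heY.map_injective ?_)
  · rw [← hfst, Measure.map_map measurable_fst hj, Measure.map_map heX.measurable measurable_fst]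
    rfl
  · rw [← Measure.join_map_map heY.measurable, ← hsnd,
      Measure.map_map measurable_toMeasure_snd_fst hj,
      Measure.map_map (Measure.measurable_map eY heY.measurable) hcoe]
    rfl

end Compactification

section CompactifiedCost

variable {X Y KX KY : Type*} [MeasurableSpace Y]

lemma tendsto_of_tendsto_map [TopologicalSpace Y] [OpensMeasurableSpace Y]
    [TopologicalSpace KY] [MeasurableSpace KY] [BorelSpace KY] [HasOuterApproxClosed KY]
    {eY : Y → KY} (heY : Topology.IsEmbedding eY)
    (hmeas : Measurable eY) {ps : ℕ → ProbabilityMeasure Y} {p : ProbabilityMeasure Y}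
    (h : Tendsto (fun n => (ps n).map hmeas.aemeasurable) atTop (𝓝 (p.map hmeas.aemeasurable))) :
    Tendsto ps atTop (𝓝 p) := by
  refine tendsto_of_forall_isOpen_le_liminf' fun G hG => ?_
  obtain ⟨V, hV, rfl⟩ := heY.isOpen_iff.1 hG
  have hle := ProbabilityMeasure.le_liminf_measure_open_of_tendsto h hV
  simp only [ProbabilityMeasure.toMeasure_map, Measure.map_apply hmeas hV.measurableSet] at hle
  exact hle

variable [PseudoMetricSpace X] [PseudoMetricSpace Y] {r : ℝ} {x₀ : X} {y₀ : Y} {K : ℝ}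

/-- The growth `K (1 + d(x, x₀)^r + ∫ d(y, y₀)^r p(dy))` allowed for the negative part of a
cost. -/
def growthBound (r : ℝ) (x₀ : X) (y₀ : Y) (K : ℝ) (xp : X × Measure Y) : ℝ :=
  K * (1 + dist xp.1 x₀ ^ r + (rMoment r y₀ xp.2).toReal)

lemma measurable_growthBound [MeasurableSpace X] [OpensMeasurableSpace X] [OpensMeasurableSpace Y]
    (r : ℝ) (x₀ : X) (y₀ : Y) (K : ℝ) : Measurable (growthBound r x₀ y₀ K) := by
  have hmom : Measurable fun xp : X × Measure Y => (rMoment r y₀ xp.2).toReal :=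
    ((measurable_rMoment r y₀).comp measurable_snd).ennreal_toReal
  have hdist : Measurable fun xp : X × Measure Y => dist xp.1 x₀ ^ r := by fun_prop
  exact ((hdist.const_add 1).add hmom).const_mul K

variable {C : X × Measure Y → EReal}

lemma add_growthBound_nonneg [OpensMeasurableSpace Y] [SecondCountableTopology Y] (hr : 0 < r)
    (hlb : ∀ x, ∀ p ∈ Pr r y₀,
      ((-(K * (1 + dist x x₀ ^ r + (Wr r p (Measure.dirac y₀) ^ r).toReal)) : ℝ) : EReal)
        ≤ C (x, p)) (x : X) {p : Measure Y} (hp : p ∈ Pr r y₀) :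
    0 ≤ C (x, p) + growthBound r x₀ y₀ K (x, p) := by
  have := hp.1
  have hle := hlb x p hp
  rw [Wr_dirac_rpow hr] at hle
  calc (0 : EReal)
      = ((-growthBound r x₀ y₀ K (x, p) : ℝ) : EReal) + growthBound r x₀ y₀ K (x, p) := by
        rw [← EReal.coe_add, neg_add_cancel, EReal.coe_zero]
    _ ≤ _ := add_le_add_left hle _

variable [SecondCountableTopology Y] [OpensMeasurableSpace Y] [TopologicalSpace KX]
  [TopologicalSpace KY] [MeasurableSpace KY] [BorelSpace KY] [HasOuterApproxClosed KY]
  {eX : X → KX} {eY : Y → KY}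

lemma add_growthBound_le_liminf (hr : 0 < r) (hlsc : LscWr r y₀ C)
    (heX : Topology.IsEmbedding eX) (heY : Topology.IsEmbedding eY) (hmeas : Measurable eY)
    {xps : ℕ → X × ProbabilityMeasure Y} {xp : X × ProbabilityMeasure Y}
    (hxps : ∀ n, ((xps n).2 : Measure Y) ∈ Pr r y₀) (hxp : (xp.2 : Measure Y) ∈ Pr r y₀)
    (h : Tendsto (fun n => compactification r y₀ eX hmeas (xps n)) atTop
      (𝓝 (compactification r y₀ eX hmeas xp))) :
    C (inclMeasure X Y xp) + growthBound r x₀ y₀ K (inclMeasure X Y xp) ≤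
      liminf (fun n => C (inclMeasure X Y (xps n))
        + growthBound r x₀ y₀ K (inclMeasure X Y (xps n))) atTop := by
  have hfst : Tendsto (fun n => (xps n).1) atTop (𝓝 xp.1) := heX.tendsto_nhds_iff.2 h.fst_nhds
  have hmom := h.snd_nhds.snd_nhds
  have hWr := wrTendsto_of_tendsto hr (tendsto_of_tendsto_map heY hmeas h.snd_nhds.fst_nhds)
    hxp.2.ne (fun n => (hxps n).2.ne) hmom
  have hbound : Tendsto (fun n => growthBound r x₀ y₀ K (inclMeasure X Y (xps n))) atTop
      (𝓝 (growthBound r x₀ y₀ K (inclMeasure X Y xp))) :=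
    ((((continuous_dist_rpow hr.le x₀).tendsto _).comp hfst).const_add 1
      |>.add ((ENNReal.tendsto_toReal hxp.2.ne).comp hmom)).const_mul K
  rw [← ((continuous_coe_real_ereal.tendsto _).comp hbound).liminf_eq]
  exact (add_le_add_left (hlsc _ _ _ _ hxp hxps hfst hWr) _).trans EReal.le_liminf_add

lemma exists_lowerSemicontinuous_compactified_cost [FirstCountableTopology KX]
    [FirstCountableTopology (ProbabilityMeasure KY)] (hr : 0 < r) (hlsc : LscWr r y₀ C)
    (hlb : ∀ x, ∀ p ∈ Pr r y₀,
      ((-(K * (1 + dist x x₀ ^ r + (Wr r p (Measure.dirac y₀) ^ r).toReal)) : ℝ) : EReal)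
        ≤ C (x, p))
    (heX : Topology.IsEmbedding eX) (heY : Topology.IsEmbedding eY) (hmeas : Measurable eY) :
    ∃ c : KX × ProbabilityMeasure KY × ℝ≥0∞ → ℝ≥0∞, LowerSemicontinuous c ∧
      ∀ xp : X × ProbabilityMeasure Y, (xp.2 : Measure Y) ∈ Pr r y₀ →
        (c (compactification r y₀ eX hmeas xp) : EReal) =
          C (inclMeasure X Y xp) + growthBound r x₀ y₀ K (inclMeasure X Y xp) := by
  obtain ⟨c, hc, hcj⟩ := exists_lowerSemicontinuous_extension
    (A := {xp : X × ProbabilityMeasure Y // (xp.2 : Measure Y) ∈ Pr r y₀})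
    (fun a => compactification r y₀ eX hmeas a.1)
    (fun a => (C (inclMeasure X Y a.1)
      + growthBound r x₀ y₀ K (inclMeasure X Y a.1)).toENNReal) fun a as has => by
    refine (EReal.toENNReal_le_toENNReal
      (add_growthBound_le_liminf hr hlsc heX heY hmeas (fun n => (as n).2) a.2 has)).trans_eq ?_
    exact Monotone.map_liminf_of_continuousAt (fun _ _ => EReal.toENNReal_le_toENNReal) _
      EReal.continuous_toENNReal.continuousAt
  refine ⟨c, hc, fun xp hxp => ?_⟩
  rw [hcj ⟨xp, hxp⟩]
  exact EReal.coe_toENNReal (add_growthBound_nonneg hr hlb xp.1 hxp)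

end CompactifiedCost

section RelaxedPlan

variable {X Y KX KY : Type*} [MeasurableSpace X] [PseudoMetricSpace X]
  [MeasurableSpace Y] [PseudoMetricSpace Y] {r : ℝ} {x₀ : X} {y₀ : Y}
  {μ : Measure X} {ν : Measure Y}

section Pairing

variable [OpensMeasurableSpace X] [OpensMeasurableSpace Y]

/-- The linear functional `(φ, ψ) ↦ ∫ φ dμ + ∫ ψ dν` on `Φ_r × Φ_r`. -/
def growthPairing (hμ : μ ∈ Pr r x₀) (hν : ν ∈ Pr r y₀) :
    growthSubmodule r x₀ × growthSubmodule r y₀ →ₗ[ℝ] ℝ :=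
  (growthIntegral hμ).coprod (growthIntegral hν)

lemma growthPairing_apply (hμ : μ ∈ Pr r x₀) (hν : ν ∈ Pr r y₀)
    (v : growthSubmodule r x₀ × growthSubmodule r y₀) :
    growthPairing hμ hν v = ∫ x, v.1.1 x ∂μ + ∫ y, v.2.1 y ∂ν := rfl

lemma growthPairing_dirac_apply (x : X) (hν : ν ∈ Pr r y₀)
    (v : growthSubmodule r x₀ × growthSubmodule r y₀) :
    growthPairing (dirac_mem_Pr r x₀ x) hν v = v.1.1 x + ∫ y, v.2.1 y ∂ν := by
  rw [growthPairing_apply, integral_dirac' _ _ v.1.2.1.stronglyMeasurable]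

end Pairing

variable [MeasurableSpace KX] [MeasurableSpace KY] [TopologicalSpace KX] [TopologicalSpace KY]
  [OpensMeasurableSpace KY] {eX : X → KX} {eY : Y → KY} {hmeas : Measurable eY}
  {Q : Measure (KX × ProbabilityMeasure KY × ℝ≥0∞)}

/-- `Q` satisfies every inequality `∫ h dQ ≤ ∫ φ dμ + ∫ ψ dν` with `φ, ψ ∈ Φ_r` and `h` lower
semicontinuous which holds for the images under the compactification of the plans of `Λ(μ, ν)`
because `h (x, p) ≤ φ x + ∫ ψ dp`. -/
def IsSubordinate (x₀ : X) (y₀ : Y) (r : ℝ) (μ : Measure X) (ν : Measure Y) (eX : X → KX)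
    (hmeas : Measurable eY) (Q : Measure (KX × ProbabilityMeasure KY × ℝ≥0∞)) : Prop :=
  ∀ h : KX × ProbabilityMeasure KY × ℝ≥0∞ → ℝ≥0∞, LowerSemicontinuous h →
    ∀ φ ∈ PhiR r x₀, ∀ ψ ∈ PhiR r y₀,
      (∀ xp : X × ProbabilityMeasure Y, (xp.2 : Measure Y) ∈ Pr r y₀ →
        0 ≤ φ xp.1 + ∫ y, ψ y ∂xp.2 ∧
          h (compactification r y₀ eX hmeas xp) ≤ ENNReal.ofReal (φ xp.1 + ∫ y, ψ y ∂xp.2)) →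
      ∫⁻ z, h z ∂Q ≤ ENNReal.ofReal (∫ x, φ x ∂μ + ∫ y, ψ y ∂ν)

theorem exists_isSubordinate_lintegral_le [OpensMeasurableSpace X] [OpensMeasurableSpace Y]
    [BorelSpace KX] [CompactSpace KX] [TopologicalSpace.MetrizableSpace KX] [BorelSpace KY]
    [CompactSpace KY] [TopologicalSpace.MetrizableSpace KY]
    (hμ : μ ∈ Pr r x₀) (hν : ν ∈ Pr r y₀) (eX : X → KX) (hmeas : Measurable eY)
    {c : KX × ProbabilityMeasure KY × ℝ≥0∞ → ℝ≥0∞} (hc : LowerSemicontinuous c) {α : ℝ}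
    (hdual : ∀ φ ∈ PhiR r x₀, ∀ ψ ∈ PhiR r y₀,
      (∀ xp : X × ProbabilityMeasure Y, (xp.2 : Measure Y) ∈ Pr r y₀ →
        ENNReal.ofReal (φ xp.1 + ∫ y, ψ y ∂xp.2) ≤ c (compactification r y₀ eX hmeas xp)) →
      ∫ x, φ x ∂μ + ∫ y, ψ y ∂ν ≤ α) :
    ∃ Q : ProbabilityMeasure (KX × ProbabilityMeasure KY × ℝ≥0∞),
      ∫⁻ z, c z ∂Q ≤ ENNReal.ofReal α ∧ IsSubordinate x₀ y₀ r μ ν eX hmeas Q := by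
  let A := {xp : X × ProbabilityMeasure Y // (xp.2 : Measure Y) ∈ Pr r y₀}
  let e : growthSubmodule r x₀ × growthSubmodule r y₀ :=
    (⟨fun _ => 1, mem_growthSubmodule_of_bounded continuous_const fun _ => abs_one.le⟩, 0)
  have := hμ.1
  obtain ⟨Q, hQc, hQ⟩ := exists_lintegral_le_of_dual_le
    (j := fun a : A => compactification r y₀ eX hmeas a.1)
    (ev := fun a : A => growthPairing (dirac_mem_Pr r x₀ a.1.1) a.2) (ℓ := growthPairing hμ hν)
    (e := e) (fun a => by simp [growthPairing_dirac_apply, e])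
    (by simp [growthPairing_apply, e]) hc fun v hv =>
      hdual v.1.1 v.1.2 v.2.1 v.2.2 fun xp hxp =>
        growthPairing_dirac_apply xp.1 hxp v ▸ hv ⟨xp, hxp⟩
  refine ⟨Q, hQc, fun h hh φ hφ ψ hψ hle => hQ h hh (⟨φ, hφ⟩, ⟨ψ, hψ⟩) fun a => ?_⟩
  rw [growthPairing_dirac_apply]
  exact hle a.1 a.2

lemma coe_comp_mem_growthSubmodule {A K : Type*} [PseudoMetricSpace A] [TopologicalSpace K]
    {x₀ : A} {e : A → K} (he : Continuous e) (f : BoundedContinuousFunction K ℝ≥0) :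
    (fun x => (f (e x) : ℝ)) ∈ growthSubmodule r x₀ :=
  mem_growthSubmodule_of_bounded (by fun_prop) fun x => by
    rw [NNReal.abs_eq]
    exact BoundedContinuousFunction.NNReal.upper_bound f (e x)

namespace IsSubordinate

lemma map_fst_eq [OpensMeasurableSpace X] [BorelSpace KX] [HasOuterApproxClosed KX]
    [IsProbabilityMeasure Q] (hμ : μ ∈ Pr r x₀) (heX : Continuous eX)
    (hQ : IsSubordinate x₀ y₀ r μ ν eX hmeas Q) : Q.map Prod.fst = μ.map eX := by
  have := hμ.1
  have := Measure.isProbabilityMeasure_map (μ := μ) heX.measurable.aemeasurable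
  have := Measure.isProbabilityMeasure_map (μ := Q) measurable_fst.aemeasurable
  refine measure_eq_of_forall_lintegral_le fun f => ?_
  have hφ := coe_comp_mem_growthSubmodule (r := r) (x₀ := x₀) heX f
  have hle := hQ (fun z => f z.1) (by fun_prop : Continuous _).lowerSemicontinuous _ hφ _
    (growthSubmodule r y₀).zero_mem fun xp _ => by simp [compactification]
  simpa only [Pi.zero_apply, integral_zero, add_zero,
    ← lintegral_coe_eq_integral _ (integrable_of_mem_PhiR hμ hφ),
    ← lintegral_map (f := fun k => (f k : ℝ≥0∞)) (by fun_prop) heX.measurable,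
    ← lintegral_map (f := fun k => (f k : ℝ≥0∞)) (by fun_prop) measurable_fst] using hle

lemma join_map_eq [OpensMeasurableSpace Y] [BorelSpace KY] [HasOuterApproxClosed KY]
    [IsProbabilityMeasure Q] (hν : ν ∈ Pr r y₀) (heY : Continuous eY)
    (hQ : IsSubordinate x₀ y₀ r μ ν eX hmeas Q) :
    (Q.map fun z => (z.2.1 : Measure KY)).join = ν.map eY := by
  have := hν.1
  have := Measure.isProbabilityMeasure_map (μ := ν) hmeas.aemeasurable
  have : IsProbabilityMeasure (Q.map fun z => (z.2.1 : Measure KY)).join := ⟨by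
    rw [Measure.join_apply .univ,
      lintegral_map (Measure.measurable_coe .univ) measurable_toMeasure_snd_fst]
    simp⟩
  refine measure_eq_of_forall_lintegral_le fun f => ?_
  have hψ := coe_comp_mem_growthSubmodule (r := r) (x₀ := y₀) heY f
  have hcont : Continuous fun z : KX × ProbabilityMeasure KY × ℝ≥0∞ =>
      ∫⁻ k, f k ∂(z.2.1 : Measure KY) :=
    (ProbabilityMeasure.continuous_lintegral_boundedContinuousFunction f).comp
      (continuous_fst.comp continuous_snd)
  have hle := hQ _ hcont.lowerSemicontinuous _ (growthSubmodule r x₀).zero_mem _ hψ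
    fun xp hxp => by
      rw [Pi.zero_apply, zero_add, ← lintegral_coe_eq_integral _ (integrable_of_mem_PhiR hxp hψ)]
      exact ⟨integral_nonneg fun _ => NNReal.coe_nonneg _, (lintegral_map (by fun_prop) hmeas).le⟩
  rw [Measure.lintegral_join (by fun_prop),
    lintegral_map (Measure.measurable_lintegral (by fun_prop)) measurable_toMeasure_snd_fst,
    lintegral_map (by fun_prop) hmeas]
  simpa only [Pi.zero_apply, integral_zero, zero_add,
    ← lintegral_coe_eq_integral _ (integrable_of_mem_PhiR hν hψ)] using hle

lemma ae_lintegral_le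
    [TopologicalSpace.PseudoMetrizableSpace KY] [TopologicalSpace.SeparableSpace KY]
    (hQ : IsSubordinate x₀ y₀ r μ ν eX hmeas Q) {g : KY → ℝ≥0∞} (hg : LowerSemicontinuous g)
    (hge : ∀ y, g (eY y) = ENNReal.ofReal (dist y y₀ ^ r)) :
    ∀ᵐ z ∂Q, ∫⁻ k, g k ∂(z.2.1 : Measure KY) ≤ z.2.2 := by
  let B := {z : KX × ProbabilityMeasure KY × ℝ≥0∞ | ∫⁻ k, g k ∂(z.2.1 : Measure KY) ≤ z.2.2}
  have hB : IsClosed B :=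
    (lowerSemicontinuous_lintegral hg).isClosed_epigraph.preimage continuous_snd
  have hmem : ∀ xp : X × ProbabilityMeasure Y, compactification r y₀ eX hmeas xp ∈ B := fun xp => by
    change ∫⁻ k, g k ∂(xp.2 : Measure Y).map eY ≤ rMoment r y₀ xp.2
    rw [lintegral_map hg.measurable hmeas]
    exact (lintegral_congr hge).le
  have hle := hQ (Bᶜ.indicator 1) (hB.isOpen_compl.lowerSemicontinuous_indicator zero_le_one) _
    (growthSubmodule r x₀).zero_mem _ (growthSubmodule r y₀).zero_mem fun xp _ => by
      simp [indicator_of_notMem (notMem_compl_iff.2 (hmem xp))]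
  have hBmeas : MeasurableSet B :=
    measurableSet_le ((Measure.measurable_lintegral hg.measurable).comp
      measurable_toMeasure_snd_fst) (measurable_snd.comp measurable_snd)
  rw [lintegral_indicator_one hBmeas.compl] at hle
  exact mem_ae_iff.2 (by simpa using hle)

lemma lintegral_snd_snd_le [OpensMeasurableSpace Y] (hr : 0 ≤ r) (hν : FinMom r y₀ ν)
    (hQ : IsSubordinate x₀ y₀ r μ ν eX hmeas Q) : ∫⁻ z, z.2.2 ∂Q ≤ rMoment r y₀ ν := by
  have hle := hQ (fun z => z.2.2) (by fun_prop : Continuous _).lowerSemicontinuous _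
    (growthSubmodule r x₀).zero_mem _ (dist_rpow_mem_growthSubmodule hr) fun xp hxp => by
      have hfin : rMoment r y₀ xp.2 ≠ ⊤ := hxp.2.ne
      simp [integral_dist_rpow, compactification, hfin]
  have hfin : rMoment r y₀ ν ≠ ⊤ := hν.ne
  simpa [integral_dist_rpow, hfin] using hle

end IsSubordinate

end RelaxedPlan

section StrongDuality

variable {X Y : Type*} [MeasurableSpace X] [MeasurableSpace Y] {r : ℝ} {K : ℝ}
  {μ : Measure X} {ν : Measure Y} {C : X × Measure Y → EReal}
  {c : X × Measure Y → ℝ≥0∞}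

section Embedded

variable {KX KY : Type*} [TopologicalSpace KX] [TopologicalSpace.MetrizableSpace KX]
  [MeasurableSpace KX] [BorelSpace KX] [TopologicalSpace KY] [CompactSpace KY]
  [TopologicalSpace.MetrizableSpace KY] [MeasurableSpace KY] [BorelSpace KY]
  [MetricSpace X] [BorelSpace X] [MetricSpace Y] [BorelSpace Y] [StandardBorelSpace Y]
  {x₀ : X} {y₀ : Y} {eX : X → KX} {eY : Y → KY}

lemma exists_measurable_compactified_cost [SecondCountableTopology Y] (hr : 0 < r)
    (hlsc : LscWr r y₀ C)
    (hlb : ∀ x, ∀ p ∈ Pr r y₀,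
      ((-(K * (1 + dist x x₀ ^ r + (Wr r p (Measure.dirac y₀) ^ r).toReal)) : ℝ) : EReal)
        ≤ C (x, p))
    (heX : Topology.IsEmbedding eX) (heY : Topology.IsEmbedding eY) :
    ∃ (cZ : KX × ProbabilityMeasure KY × ℝ≥0∞ → ℝ≥0∞) (c : X × Measure Y → ℝ≥0∞),
      LowerSemicontinuous cZ ∧ Measurable c ∧
      (∀ xp, c (inclMeasure X Y xp) =
        cZ (compactification r y₀ eX heY.continuous.measurable xp)) ∧
      ∀ x, ∀ p ∈ Pr r y₀, (c (x, p) : EReal) = C (x, p) + growthBound r x₀ y₀ K (x, p) := by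
  have hmY := heY.continuous.measurable.measurableEmbedding heY.injective
  obtain ⟨cZ, hcZ, hcZC⟩ :=
    exists_lowerSemicontinuous_compactified_cost hr hlsc hlb heX heY hmY.measurable
  obtain ⟨c, hc, hcj⟩ := measurableEmbedding_inclMeasure.exists_measurable_extend
    (hcZ.measurable.comp (measurable_compactification (r := r) (y₀ := y₀)
      heX.continuous.measurable hmY)) fun _ => inferInstance
  refine ⟨cZ, c, hcZ, hc, congrFun hcj, fun x p hp => ?_⟩
  exact (congrArg _ (congrFun hcj (x, ⟨p, hp.1⟩))).trans (hcZC (x, ⟨p, hp.1⟩) hp)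

variable [CompactSpace KX] [StandardBorelSpace X]

theorem exists_mem_Lambda_lintegral_le (hr : 0 ≤ r) (hμ : μ ∈ Pr r x₀) (hν : ν ∈ Pr r y₀)
    (heX : Topology.IsEmbedding eX) (heY : Topology.IsEmbedding eY)
    {cZ : KX × ProbabilityMeasure KY × ℝ≥0∞ → ℝ≥0∞} (hcZ : LowerSemicontinuous cZ)
    (hc : Measurable c) (hcj : ∀ xp, c (inclMeasure X Y xp) =
      cZ (compactification r y₀ eX heY.continuous.measurable xp)) {α : ℝ}
    (hdual : ∀ φ ∈ PhiR r x₀, ∀ ψ ∈ PhiR r y₀,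
      (∀ x, ∀ p ∈ Pr r y₀, ENNReal.ofReal (φ x + ∫ y, ψ y ∂p) ≤ c (x, p)) →
      ∫ x, φ x ∂μ + ∫ y, ψ y ∂ν ≤ α) :
    ∃ P ∈ Lambda μ ν, ∫⁻ xp, c xp ∂P ≤ ENNReal.ofReal α := by
  have := polishSpace_of_compactSpace_of_metrizableSpace KX
  have := polishSpace_of_compactSpace_of_metrizableSpace KY
  have hmX := heX.continuous.measurable.measurableEmbedding heX.injective
  have hmY := heY.continuous.measurable.measurableEmbedding heY.injective
  have hj := measurableEmbedding_compactification (r := r) (y₀ := y₀) hmX hmY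
  obtain ⟨Q, hQc, hQ⟩ := exists_isSubordinate_lintegral_le hμ hν eX hmY.measurable hcZ
    fun φ hφ ψ hψ hle => hdual φ hφ ψ hψ fun x p hp =>
      (hle (x, ⟨p, hp.1⟩) hp).trans_eq (hcj (x, ⟨p, hp.1⟩)).symm
  obtain ⟨g, hg, hge⟩ := exists_lowerSemicontinuous_extension eY
    (fun y => ENNReal.ofReal (dist y y₀ ^ r)) fun y ys hys =>
      ((ENNReal.continuous_ofReal.comp (continuous_dist_rpow hr y₀)).tendsto y |>.comp
        (heY.tendsto_nhds_iff.2 hys)).liminf_eq.ge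
  have hfst := hQ.map_fst_eq hμ heX.continuous
  have hsnd := hQ.join_map_eq hν heY.continuous
  have hrange := ae_mem_range_compactification hmX hmY hfst hsnd hν.2 hg.measurable hge
    (hQ.ae_lintegral_le hg hge) (hQ.lintegral_snd_snd_le hr hν.2)
  let P := (Q : Measure (KX × ProbabilityMeasure KY × ℝ≥0∞)).comap
    (compactification r y₀ eX hmY.measurable)
  have hPQ : P.map (compactification r y₀ eX hmY.measurable) = Q := by
    rw [hj.map_comap, Measure.restrict_eq_self_of_ae_mem hrange]
  have : IsProbabilityMeasure (P.map (compactification r y₀ eX hmY.measurable)) :=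
    hPQ ▸ inferInstance
  have := P.isProbabilityMeasure_of_map (compactification r y₀ eX hmY.measurable)
  refine ⟨P.map (inclMeasure X Y), map_inclMeasure_mem_Lambda_of_map_compactification hmX hmY
    (hPQ ▸ hfst) (hPQ ▸ hsnd), ?_⟩
  rw [lintegral_map hc measurableEmbedding_inclMeasure.measurable, lintegral_congr hcj,
    ← hj.lintegral_map, hPQ]
  exact hQc

end Embedded

end StrongDuality

section Cost

lemma eq_neg_coe_add_of_eq_add_coe {a b : EReal} {h : ℝ} (hab : b = a + h) :
    a = ((-h : ℝ) : EReal) + b := by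
  rw [hab, add_left_comm, ← EReal.coe_add, neg_add_cancel, EReal.coe_zero, add_zero]

variable {X Y : Type*} [MeasurableSpace Y] [PseudoMetricSpace X] [PseudoMetricSpace Y] {r : ℝ}
  {x₀ : X} {y₀ : Y} {K : ℝ} {C : X × Measure Y → EReal} {c : X × Measure Y → ℝ≥0∞}

variable [OpensMeasurableSpace Y]

lemma integral_sub_const_mul_dist_rpow {p : Measure Y} (hp : p ∈ Pr r y₀) {ψ : Y → ℝ}
    (hψ : ψ ∈ PhiR r y₀) :
    ∫ y, (ψ y - K * dist y y₀ ^ r) ∂p = ∫ y, ψ y ∂p - K * ∫ y, dist y y₀ ^ r ∂p := by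
  rw [integral_sub (integrable_of_mem_PhiR hp hψ) ((integrable_dist_rpow hp.2).const_mul K),
    integral_const_mul]

lemma coe_sub_growthBound_le_of_ofReal_le {φ : X → ℝ} {ψ : Y → ℝ} (hψ : ψ ∈ PhiR r y₀) {x : X}
    {p : Measure Y} (hp : p ∈ Pr r y₀)
    (hcC : (c (x, p) : EReal) = C (x, p) + growthBound r x₀ y₀ K (x, p))
    (hle : ENNReal.ofReal (φ x + ∫ y, ψ y ∂p) ≤ c (x, p)) :
    ((φ x - K * dist x x₀ ^ r - K + ∫ y, (ψ y - K * dist y y₀ ^ r) ∂p : ℝ) : EReal)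
      ≤ C (x, p) := by
  have heq : φ x - K * dist x x₀ ^ r - K + ∫ y, (ψ y - K * dist y y₀ ^ r) ∂p
      = -growthBound r x₀ y₀ K (x, p) + (φ x + ∫ y, ψ y ∂p) := by
    rw [integral_sub_const_mul_dist_rpow hp hψ, integral_dist_rpow, growthBound]
    ring
  rw [heq, eq_neg_coe_add_of_eq_add_coe hcC, EReal.coe_add]
  refine add_le_add_right (le_trans ?_ (EReal.coe_ennreal_le_coe_ennreal_iff.2 hle)) _
  rw [EReal.coe_ennreal_ofReal]
  exact EReal.coe_le_coe (le_max_left _ _)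

variable [MeasurableSpace X] [OpensMeasurableSpace X] {μ : Measure X} {ν : Measure Y}
  {P : Measure (X × Measure Y)}

lemma integral_add_integral_le_of_ofReal_le (hr : 0 ≤ r) (hμ : μ ∈ Pr r x₀) (hν : ν ∈ Pr r y₀)
    (hcC : ∀ x, ∀ p ∈ Pr r y₀, (c (x, p) : EReal) = C (x, p) + growthBound r x₀ y₀ K (x, p))
    {b : ℝ} (hb : ∀ φ ∈ PhiR r x₀, ∀ ψ ∈ PhiR r y₀,
      (∀ x, ∀ p ∈ Pr r y₀, ((φ x + ∫ y, ψ y ∂p : ℝ) : EReal) ≤ C (x, p)) →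
      ∫ x, φ x ∂μ + ∫ y, ψ y ∂ν ≤ b)
    {φ : X → ℝ} (hφ : φ ∈ PhiR r x₀) {ψ : Y → ℝ} (hψ : ψ ∈ PhiR r y₀)
    (hle : ∀ x, ∀ p ∈ Pr r y₀, ENNReal.ofReal (φ x + ∫ y, ψ y ∂p) ≤ c (x, p)) :
    ∫ x, φ x ∂μ + ∫ y, ψ y ∂ν
      ≤ K * (1 + ∫ x, dist x x₀ ^ r ∂μ + ∫ y, dist y y₀ ^ r ∂ν) + b := by
  have := hμ.1
  have hφK := sub_const_mul_dist_rpow_mem_PhiR hr K hφ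
  have hle' := hb (fun x => φ x - K * dist x x₀ ^ r - K)
    (sub_mem (H := growthSubmodule r x₀) hφK
      (mem_growthSubmodule_of_bounded continuous_const fun _ => le_rfl))
    _ (sub_const_mul_dist_rpow_mem_PhiR hr K hψ) fun x p hp =>
      coe_sub_growthBound_le_of_ofReal_le hψ hp (hcC x p hp) (hle x p hp)
  rw [integral_sub (integrable_of_mem_PhiR hμ hφK) (integrable_const K), integral_const,
    probReal_univ, one_smul, integral_sub_const_mul_dist_rpow hμ hφ,
    integral_sub_const_mul_dist_rpow hν hψ] at hle'
  linarith

lemma integrable_growthBound_of_mem_Lambda (hμ : FinMom r x₀ μ) (hν : FinMom r y₀ ν)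
    (hP : P ∈ Lambda μ ν) : Integrable (growthBound r x₀ y₀ K) P := by
  have := hP.1
  exact (((integrable_const 1).add (integrable_dist_fst_of_mem_Lambda hP hμ)).add
    (integrable_rMoment_snd_of_mem_Lambda hP hν)).const_mul K

lemma integral_growthBound_of_mem_Lambda (hμ : FinMom r x₀ μ) (hν : FinMom r y₀ ν)
    (hP : P ∈ Lambda μ ν) : ∫ xp, growthBound r x₀ y₀ K xp ∂P
      = K * (1 + ∫ x, dist x x₀ ^ r ∂μ + ∫ y, dist y y₀ ^ r ∂ν) := by
  have := hP.1
  have hX := integrable_dist_fst_of_mem_Lambda hP hμ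
  have hXeq : ∫ xp : X × Measure Y, dist xp.1 x₀ ^ r ∂P = ∫ x, dist x x₀ ^ r ∂μ := by
    rw [← (mem_Lambda_iff.1 hP).2.2.1, integral_map measurable_fst.aemeasurable
      (by fun_prop : Measurable fun x => dist x x₀ ^ r).aestronglyMeasurable]
  have hYeq : ∫ xp : X × Measure Y, (rMoment r y₀ xp.2).toReal ∂P = ∫ y, dist y y₀ ^ r ∂ν := by
    simp only [← integral_dist_rpow _ y₀ (_ : Measure Y)]
    exact integral_integral_of_mem_Lambda hP (by fun_prop) (integrable_dist_rpow hν)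
  have h1X : Integrable (fun xp : X × Measure Y => 1 + dist xp.1 x₀ ^ r) P :=
    (integrable_const 1).add hX
  simp only [growthBound]
  rw [integral_const_mul, integral_add h1X (integrable_rMoment_snd_of_mem_Lambda hP hν),
    integral_add (integrable_const 1) hX, hXeq, hYeq, integral_const, probReal_univ, one_smul]

lemma eInt_eq_of_eq_add_growthBound (hμ : FinMom r x₀ μ) (hν : FinMom r y₀ ν)
    (hP : P ∈ Lambda μ ν) (hc : Measurable c)
    (hcC : ∀ x, ∀ p ∈ Pr r y₀, (c (x, p) : EReal) = C (x, p) + growthBound r x₀ y₀ K (x, p)) :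
    eInt C P = ((-(K * (1 + ∫ x, dist x x₀ ^ r ∂μ + ∫ y, dist y y₀ ^ r ∂ν)) : ℝ) : EReal)
      + (∫⁻ xp, c xp ∂P : ℝ≥0∞) := by
  have hae : C =ᵐ[P] fun xp => ((-growthBound r x₀ y₀ K xp : ℝ) : EReal) + c xp := by
    filter_upwards [ae_mem_Pr_of_mem_Lambda hP hν] with xp hxp
    exact eq_neg_coe_add_of_eq_add_coe (hcC xp.1 xp.2 hxp)
  have hint : Integrable (fun xp => -growthBound r x₀ y₀ K xp) P :=
    (integrable_growthBound_of_mem_Lambda hμ hν hP).neg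
  have hnonneg : ∫⁻ xp, (-(c xp : EReal)).toENNReal ∂P ≠ ⊤ := by
    simp only [toENNReal_neg_coe_ennreal, lintegral_zero, ne_eq, ENNReal.zero_ne_top,
      not_false_eq_true]
  rw [eInt_congr_ae hae, eInt_coe_add hc.coe_ereal_ennreal.aemeasurable hint hnonneg,
    integral_neg, integral_growthBound_of_mem_Lambda hμ hν hP, eInt_coe_ennreal]

end Cost

section WeakDuality

variable {X Y : Type*} [MeasurableSpace Y] [PseudoMetricSpace Y] {r : ℝ} {y₀ : Y}
  {C : X × Measure Y → EReal} {ψ : Y → ℝ}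

lemma coe_le_RC {φ : X → ℝ} {x : X}
    (hle : ∀ p ∈ Pr r y₀, ((φ x + ∫ y, ψ y ∂p : ℝ) : EReal) ≤ C (x, p)) :
    (φ x : EReal) ≤ RC r y₀ C ψ x :=
  le_iInf₂ fun p hp => calc
    (φ x : EReal) = ((-∫ y, ψ y ∂p : ℝ) : EReal) + ((φ x + ∫ y, ψ y ∂p : ℝ) : EReal) := by
      rw [← EReal.coe_add, neg_add_eq_sub, add_sub_cancel_right]
    _ ≤ ((-∫ y, ψ y ∂p : ℝ) : EReal) + C (x, p) := add_le_add_right (hle p hp) _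


variable [MeasurableSpace X] {μ : Measure X} {ν : Measure Y}

lemma integral_add_integral_le_integral_add_eInt_RC {φ : X → ℝ} (hφ : Integrable φ μ)
    (hle : ∀ x, ∀ p ∈ Pr r y₀, ((φ x + ∫ y, ψ y ∂p : ℝ) : EReal) ≤ C (x, p)) :
    ((∫ x, φ x ∂μ + ∫ y, ψ y ∂ν : ℝ) : EReal) ≤
      ((∫ y, ψ y ∂ν : ℝ) : EReal) + eInt (RC r y₀ C ψ) μ := by
  rw [add_comm, EReal.coe_add, ← eInt_coe_real hφ]
  exact add_le_add_right (eInt_mono_ae (ae_of_all _ fun x => coe_le_RC (hle x))) _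

theorem integral_add_eInt_RC_le [OpensMeasurableSpace Y] (hν : ν ∈ Pr r y₀)
    {P : Measure (X × Measure Y)} (hP : P ∈ Lambda μ ν) (hψ : ψ ∈ PhiR r y₀)
    (hR : AEMeasurable (RC r y₀ C ψ) μ) :
    ((∫ y, ψ y ∂ν : ℝ) : EReal) + eInt (RC r y₀ C ψ) μ ≤ eInt C P := by
  have hi := integrable_of_mem_PhiR hν hψ
  have hψmeas : Measurable ψ := hψ.1.measurable
  have hfst := (mem_Lambda_iff.1 hP).2.2.1
  rw [← hfst] at hR
  rw [← hfst, eInt_map_s5 measurable_fst.aemeasurable hR,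
    ← integral_integral_of_mem_Lambda hP hψmeas hi]
  refine (coe_integral_add_eInt_le (hR.comp_measurable measurable_fst)
    (integrable_integral_snd_of_mem_Lambda hP hψmeas hi)).trans (eInt_mono_ae ?_)
  filter_upwards [ae_mem_Pr_of_mem_Lambda hP hν.2] with xp hxp
  have hRC : RC r y₀ C ψ xp.1 ≤ ((-∫ y, ψ y ∂xp.2 : ℝ) : EReal) + C xp := iInf₂_le xp.2 hxp
  refine (add_le_add_right hRC _).trans_eq ?_
  rw [← add_assoc, ← EReal.coe_add, add_neg_cancel, EReal.coe_zero, zero_add]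

end WeakDuality

section Duality

variable {X Y : Type*} [MeasurableSpace X] [MeasurableSpace Y] [MetricSpace Y] [BorelSpace Y]
  [StandardBorelSpace Y] {r : ℝ} {x₀ : X} {y₀ : Y} {μ : Measure X} {ν : Measure Y}
  {C : X × Measure Y → EReal} {K : ℝ}

lemma aemeasurable_RC [StandardBorelSpace X] {G : X × Measure Y → EReal} (hG : Measurable G)
    (hCG : ∀ x, ∀ p ∈ Pr r y₀, C (x, p) = G (x, p)) {ψ : Y → ℝ} (hψ : Measurable ψ)
    (μ : Measure X) [IsFiniteMeasure μ] : AEMeasurable (RC r y₀ C ψ) μ := by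
  have hS : MeasurableSet {xp : X × ProbabilityMeasure Y | (xp.2 : Measure Y) ∈ Pr r y₀} :=
    measurable_subtype_coe.comp measurable_snd (measurableSet_Pr r y₀)
  have hf : Measurable fun xp : X × Measure Y => ((-∫ y, ψ y ∂xp.2 : ℝ) : EReal) + G xp :=
    ((measurable_integral hψ).comp measurable_snd).neg.coe_real_ereal.add hG
  convert aemeasurable_iInf_section μ hS (hf.comp measurableEmbedding_inclMeasure.measurable)
    using 2 with x
  refine le_antisymm (le_iInf₂ fun p hp => ?_) (le_iInf₂ fun p hp => ?_)
  · exact (iInf₂_le (p : Measure Y) hp).trans_eq (congrArg _ (hCG x p hp))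
  · exact (iInf₂_le (⟨p, hp.1⟩ : ProbabilityMeasure Y) hp).trans_eq
      (congrArg _ (hCG x p hp).symm)

variable [SecondCountableTopology Y] [MetricSpace X] [SecondCountableTopology X] [BorelSpace X]

lemma exists_measurable_eqOn_Pr (hr : 0 < r) (hlsc : LscWr r y₀ C)
    (hlb : ∀ x, ∀ p ∈ Pr r y₀,
      ((-(K * (1 + dist x x₀ ^ r + (Wr r p (Measure.dirac y₀) ^ r).toReal)) : ℝ) : EReal)
        ≤ C (x, p)) :
    ∃ G : X × Measure Y → EReal, Measurable G ∧ ∀ x, ∀ p ∈ Pr r y₀, C (x, p) = G (x, p) := by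
  obtain ⟨eX, heX⟩ := Metric.PiNatEmbed.exists_embedding_to_hilbert_cube (X := X)
  obtain ⟨eY, heY⟩ := Metric.PiNatEmbed.exists_embedding_to_hilbert_cube (X := Y)
  obtain ⟨-, c, -, hc, -, hcC⟩ := exists_measurable_compactified_cost hr hlsc hlb heX heY
  exact ⟨fun xp => ((-growthBound r x₀ y₀ K xp : ℝ) : EReal) + c xp,
    (measurable_growthBound r x₀ y₀ K).neg.coe_real_ereal.add hc.coe_ereal_ennreal,
    fun x p hp => eq_neg_coe_add_of_eq_add_coe (hcC x p hp)⟩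

theorem exists_mem_Lambda_eInt_le [StandardBorelSpace X] (hr : 0 < r) (hμ : μ ∈ Pr r x₀)
    (hν : ν ∈ Pr r y₀) (hlsc : LscWr r y₀ C) (hlb : ∀ x, ∀ p ∈ Pr r y₀,
      ((-(K * (1 + dist x x₀ ^ r + (Wr r p (Measure.dirac y₀) ^ r).toReal)) : ℝ) : EReal)
        ≤ C (x, p)) {b : ℝ}
    (hb : ∀ φ ∈ PhiR r x₀, ∀ ψ ∈ PhiR r y₀,
      (∀ x, ∀ p ∈ Pr r y₀, ((φ x + ∫ y, ψ y ∂p : ℝ) : EReal) ≤ C (x, p)) →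
      ∫ x, φ x ∂μ + ∫ y, ψ y ∂ν ≤ b) :
    ∃ P ∈ Lambda μ ν, eInt C P ≤ b := by
  obtain ⟨eX, heX⟩ := Metric.PiNatEmbed.exists_embedding_to_hilbert_cube (X := X)
  obtain ⟨eY, heY⟩ := Metric.PiNatEmbed.exists_embedding_to_hilbert_cube (X := Y)
  obtain ⟨cZ, c, hcZ, hc, hcj, hcC⟩ := exists_measurable_compactified_cost hr hlsc hlb heX heY
  have hdual := fun φ hφ ψ hψ =>
    integral_add_integral_le_of_ofReal_le (φ := φ) (ψ := ψ) hr.le hμ hν hcC hb hφ hψ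
  set M := K * (1 + ∫ x, dist x x₀ ^ r ∂μ + ∫ y, dist y y₀ ^ r ∂ν) with hM
  have hnonneg : 0 ≤ M + b := by
    simpa using hdual 0 (zero_mem (growthSubmodule r x₀)) 0 (zero_mem (growthSubmodule r y₀))
      fun _ _ _ => by simp
  obtain ⟨P, hP, hPc⟩ := exists_mem_Lambda_lintegral_le hr.le hμ hν heX heY hcZ hc hcj hdual
  refine ⟨P, hP, ?_⟩
  rw [eInt_eq_of_eq_add_growthBound hμ.2 hν.2 hP hc hcC, ← hM]
  calc ((-M : ℝ) : EReal) + (∫⁻ xp, c xp ∂P : ℝ≥0∞)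
      ≤ ((-M : ℝ) : EReal) + (ENNReal.ofReal (M + b) : ℝ≥0∞) :=
        add_le_add_right (EReal.coe_ennreal_le_coe_ennreal_iff.2 hPc) _
    _ = b := by rw [EReal.coe_ennreal_ofReal, max_eq_left hnonneg, ← EReal.coe_add,
        neg_add_cancel_left]

end Duality

end WOT

theorem statement5_general {X Y : Type*}
    [MeasurableSpace X] [MetricSpace X] [SecondCountableTopology X] [BorelSpace X]
    [StandardBorelSpace X] [MeasurableSpace Y] [MetricSpace Y] [SecondCountableTopology Y]
    [BorelSpace Y] [StandardBorelSpace Y]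
    (r : ℝ) (hr : 0 < r) (x₀ : X) (y₀ : Y)
    (μ : Measure X) (ν : Measure Y) [IsProbabilityMeasure μ] [IsProbabilityMeasure ν]
    (hμ : FinMom r x₀ μ) (hν : FinMom r y₀ ν)
    (C : X × Measure Y → EReal) (hlsc : LscWr r y₀ C) (K : ℝ)
    (hlb : ∀ x, ∀ p ∈ Pr r y₀,
      ((-(K * (1 + dist x x₀ ^ r + (Wr r p (Measure.dirac y₀) ^ r).toReal)) : ℝ) : EReal)
        ≤ C (x, p)) :
    sInf {v : EReal | ∃ P ∈ Lambda μ ν, v = eInt C P}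
      = sSup {v : EReal | ∃ ψ ∈ PhiR r y₀,
          v = ((∫ y, ψ y ∂ν : ℝ) : EReal) + eInt (RC r y₀ C ψ) μ} ∧
    sInf {v : EReal | ∃ P ∈ Lambda μ ν, v = eInt C P}
      = sSup {v : EReal | ∃ φ ∈ PhiR r x₀, ∃ ψ ∈ PhiR r y₀,
          (∀ x, ∀ p ∈ Pr r y₀, ((φ x + ∫ y, ψ y ∂p : ℝ) : EReal) ≤ C (x, p)) ∧
          v = ((∫ x, φ x ∂μ + ∫ y, ψ y ∂ν : ℝ) : EReal)} := by
  have hμr : μ ∈ Pr r x₀ := ⟨inferInstance, hμ⟩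
  have hνr : ν ∈ Pr r y₀ := ⟨inferInstance, hν⟩
  obtain ⟨G, hG, hCG⟩ := exists_measurable_eqOn_Pr hr hlsc hlb
  set primal := sInf {v : EReal | ∃ P ∈ Lambda μ ν, v = eInt C P}
  set dual₁ := sSup {v : EReal | ∃ ψ ∈ PhiR r y₀,
    v = ((∫ y, ψ y ∂ν : ℝ) : EReal) + eInt (RC r y₀ C ψ) μ}
  set dual₂ := sSup {v : EReal | ∃ φ ∈ PhiR r x₀, ∃ ψ ∈ PhiR r y₀,
    (∀ x, ∀ p ∈ Pr r y₀, ((φ x + ∫ y, ψ y ∂p : ℝ) : EReal) ≤ C (x, p)) ∧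
    v = ((∫ x, φ x ∂μ + ∫ y, ψ y ∂ν : ℝ) : EReal)}
  have hweak : dual₁ ≤ primal := by
    refine sSup_le fun v ⟨ψ, hψ, hv⟩ => le_sInf fun w ⟨P, hP, hw⟩ => ?_
    exact hv ▸ hw ▸ integral_add_eInt_RC_le hνr hP hψ (aemeasurable_RC hG hCG hψ.1.measurable μ)
  have hdual : dual₂ ≤ dual₁ := sSup_le fun v ⟨φ, hφ, ψ, hψ, hle, hv⟩ =>
    hv ▸ (integral_add_integral_le_integral_add_eInt_RC (integrable_of_mem_PhiR hμr hφ) hle).trans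
      (le_sSup ⟨ψ, hψ, rfl⟩)
  have hstrong : primal ≤ dual₂ := by
    refine EReal.le_of_forall_lt_iff_le.1 fun b hb => ?_
    have hbound := fun φ hφ ψ hψ hle => EReal.coe_le_coe_iff.1
      ((show _ ≤ dual₂ from le_sSup ⟨φ, hφ, ψ, hψ, hle, rfl⟩).trans hb.le)
    obtain ⟨P, hP, hPb⟩ := exists_mem_Lambda_eInt_le hr hμr hνr hlsc hlb hbound
    exact (show primal ≤ eInt C P from sInf_le ⟨P, hP, rfl⟩).trans hPb
  exact ⟨(hstrong.trans hdual).antisymm hweak, hstrong.antisymm (hdual.trans hweak)⟩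

/-- duality for the relaxed weak transport problem (Theorem `thm:duality`). -/
theorem statement5 {X Y : Type*}
    [MeasurableSpace X] [MetricSpace X] [CompleteSpace X] [SecondCountableTopology X]
    [BorelSpace X]
    [MeasurableSpace Y] [MetricSpace Y] [CompleteSpace Y] [SecondCountableTopology Y]
    [BorelSpace Y]
    (r : ℝ) (hr : 1 ≤ r) (x₀ : X) (y₀ : Y)
    (μ : Measure X) (ν : Measure Y) [IsProbabilityMeasure μ] [IsProbabilityMeasure ν]
    (hμ : FinMom r x₀ μ) (hν : FinMom r y₀ ν)
    (C : X × Measure Y → EReal) (hbot : ∀ z, C z ≠ ⊥) (hlsc : LscWr r y₀ C)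
    (K : ℝ) (hKpos : 0 < K)
    (hlb : ∀ x, ∀ p ∈ Pr r y₀,
      ((-(K * (1 + dist x x₀ ^ r + (Wr r p (Measure.dirac y₀) ^ r).toReal)) : ℝ) : EReal)
        ≤ C (x, p)) :
    sInf {v : EReal | ∃ P ∈ Lambda μ ν, v = eInt C P}
      = sSup {v : EReal | ∃ ψ ∈ PhiR r y₀,
          v = ((∫ y, ψ y ∂ν : ℝ) : EReal) + eInt (RC r y₀ C ψ) μ} ∧
    sInf {v : EReal | ∃ P ∈ Lambda μ ν, v = eInt C P}
      = sSup {v : EReal | ∃ φ ∈ PhiR r x₀, ∃ ψ ∈ PhiR r y₀,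
          (∀ x, ∀ p ∈ Pr r y₀, ((φ x + ∫ y, ψ y ∂p : ℝ) : EReal) ≤ C (x, p)) ∧
          v = ((∫ x, φ x ∂μ + ∫ y, ψ y ∂ν : ℝ) : EReal)} := by
  exact statement5_general r (zero_lt_one.trans_le hr) x₀ y₀ μ ν hμ hν C hlsc K hlb
end
end
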